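/- arXiv:math/0203033 — 11 statements merged into one kernel-verified Lean document; each statement's English description precedes it below -/
import Mathlib

section
/- For every n ≥ 1, the number of 321-avoiding derangements of {1,…,n} equals the n-th Fine number, i.e., d_n(321) = F_n. -/
/-! The bijection sends a `321`-avoiding permutation `π` to the sequence `r i = i - m i`, where
`m i = min {π j | i ≤ j}` is the suffix minimum. Suffix minima form a weakly increasing sequence
with `m i ≤ i`, which says exactly that `r` is a similarity-relation sequence.

Call `i` a record of `m` if `m i < m j` for all `j > i`. At records `π i = m i`, and off the records
a `321`-avoiding `π` is increasing; so `π` is determined by `m` (`eq_of_isSuffixMin`). Conversely,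
for a weakly increasing `m` with `m i ≤ i`, put `π i = m i` at the records and let `π` send the
remaining positions increasingly onto the remaining values. This `π` is a union of two increasing
sequences, hence `321`-avoiding, and a pigeonhole argument shows that its suffix minima are `m`
(`exists_perm_isSuffixMin`).

A fixed point `i` of a `321`-avoiding permutation splits it into two blocks, so `π i = i` holds iff
`m i = i` and `m (i + 1) = i + 1` (or `i` is last), i.e. iff `i` is isolated for `r`
(`fixed_iff_isolated`). Derangements thus correspond to sequences without isolated index. -/

open Finset Polynomial

/-- `π` contains the pattern `α`: there are indices `i₁ < ⋯ < i_m` whose images under `π`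
are in the same relative order as the values of `α`. -/
def ContainsPat {n m : ℕ} (π : Equiv.Perm (Fin n)) (α : Fin m → Fin m) : Prop :=
  ∃ f : Fin m → Fin n, StrictMono f ∧ ∀ a b, π (f a) < π (f b) ↔ α a < α b

/-- `π` avoids the pattern `α`. -/
def AvoidsPat {n m : ℕ} (π : Equiv.Perm (Fin n)) (α : Fin m → Fin m) : Prop :=
  ¬ ContainsPat π α

/-- Number of fixed points of a permutation. -/
noncomputable def fpCount {n : ℕ} (π : Equiv.Perm (Fin n)) : ℕ :=
  Nat.card {i : Fin n // π i = i}

/-- `sCount n k α` = number of `α`-avoiding permutations of `{1,…,n}` with exactly `k`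
fixed points. -/
noncomputable def sCount (n k : ℕ) (α : Fin 3 → Fin 3) : ℕ :=
  Nat.card {π : Equiv.Perm (Fin n) // AvoidsPat π α ∧ fpCount π = k}

/-- A similarity-relation sequence: `r 0 = 0` and `r (i+1) ≤ r i + 1`. -/
def IsSR {n : ℕ} (r : Fin n → ℕ) : Prop :=
  (∀ h : 0 < n, r ⟨0, h⟩ = 0) ∧
  ∀ (i : Fin n) (h : i.1 + 1 < n), r ⟨i.1 + 1, h⟩ ≤ r i + 1

/-- Index `i` is isolated: `r i = 0` and (`i` is the last index or `r (i+1) = 0`). -/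
def IsIsolated {n : ℕ} (r : Fin n → ℕ) (i : Fin n) : Prop :=
  r i = 0 ∧ ∀ h : i.1 + 1 < n, r ⟨i.1 + 1, h⟩ = 0

/-- The `n`-th Fine number: the number of similarity-relation sequences of length `n`
with no isolated index. -/
noncomputable def Fine (n : ℕ) : ℕ :=
  Nat.card {r : Fin n → ℕ // IsSR r ∧ ∀ i, ¬ IsIsolated r i}

/-! ### Avoiding `321`, and suffix minima -/

lemma avoids_321_iff {n : ℕ} (π : Equiv.Perm (Fin n)) :
    AvoidsPat π ![2, 1, 0] ↔ ∀ a b c, a < b → b < c → π c < π b → π b < π a → False := by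
  constructor
  · intro h a b c hab hbc hcb hba
    refine h ⟨![a, b, c], ?_, ?_⟩
    · intro x y hxy
      fin_cases x <;> fin_cases y <;> simp at hxy ⊢ <;> first | assumption | exact hab.trans hbc
    · intro x y
      fin_cases x <;> fin_cases y <;> simp <;>
        first | assumption | exact hcb.trans hba | exact le_of_lt (by assumption)
              | exact (hcb.trans hba).le
  · rintro h ⟨f, hf, hp⟩
    exact h (f 0) (f 1) (f 2) (hf (by decide)) (hf (by decide))
      ((hp 2 1).2 (by decide)) ((hp 1 0).2 (by decide))

/-- `m` is the sequence of suffix minima of `π`: `m i = min {π j | i ≤ j}`. -/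
def IsSuffixMin {n : ℕ} (π : Equiv.Perm (Fin n)) (m : Fin n → Fin n) : Prop :=
  ∀ i, (∀ j, i ≤ j → m i ≤ π j) ∧ ∃ j, i ≤ j ∧ π j = m i

/-- All later terms of `m` exceed `m i`; for weakly increasing `m`, `i` is the last position at
which the value `m i` is taken. -/
def IsRecord {n : ℕ} (m : Fin n → Fin n) (i : Fin n) : Prop := ∀ j, i < j → m i < m j

lemma exists_isSuffixMin {n : ℕ} (π : Equiv.Perm (Fin n)) : ∃ m, IsSuffixMin π m := by
  have key : ∀ i, ∃ x, (∀ j, i ≤ j → x ≤ π j) ∧ ∃ j, i ≤ j ∧ π j = x := by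
    intro i
    obtain ⟨j, hj, hm⟩ := Finset.exists_min_image (Finset.Ici i) π ⟨i, by simp⟩
    exact ⟨π j, fun k hk => hm k (by simpa using hk), j, by simpa using hj, rfl⟩
  choose m hm using key
  exact ⟨m, hm⟩

namespace IsSuffixMin

variable {n : ℕ} {π : Equiv.Perm (Fin n)} {m : Fin n → Fin n}

lemma unique {m' : Fin n → Fin n} (h : IsSuffixMin π m) (h' : IsSuffixMin π m') : m = m' := by
  funext i
  obtain ⟨j, hj, e⟩ := (h i).2
  obtain ⟨k, hk, e'⟩ := (h' i).2
  exact le_antisymm (e' ▸ (h i).1 k hk) (e ▸ (h' i).1 j hj)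

lemma monotone (h : IsSuffixMin π m) : Monotone m := by
  intro i j hij
  obtain ⟨k, hk, e⟩ := (h j).2
  exact e ▸ (h i).1 k (hij.trans hk)

lemma le_self (h : IsSuffixMin π m) (i : Fin n) : m i ≤ i := by
  -- `π` injects the positions `≥ i` into the values `≥ m i`.
  have hc : (Finset.Ici i).card ≤ (Finset.Ici (m i)).card :=
    Finset.card_le_card_of_injOn π (fun j hj => by simpa using (h i).1 j (by simpa using hj))
      π.injective.injOn
  simp only [Fin.card_Ici] at hc
  have := i.2
  rw [Fin.le_def]
  omega

lemma record_iff (h : IsSuffixMin π m) (i : Fin n) : IsRecord m i ↔ π i = m i := by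
  obtain ⟨j, hj, e⟩ := (h i).2
  constructor
  · intro hr
    rcases hj.eq_or_lt with rfl | hlt
    · exact e
    · exact absurd ((h j).1 j le_rfl) (by rw [e]; exact not_le.2 (hr j hlt))
  · intro hi k hk
    refine lt_of_le_of_ne (h.monotone hk.le) fun heq => ?_
    obtain ⟨l, hl, el⟩ := (h k).2
    have : l = i := π.injective (by rw [el, ← heq, hi])
    exact absurd (hk.trans_le hl) (by simp [this])

lemma strictMono_off_records (h : IsSuffixMin π m)
    (ha : ∀ a b c, a < b → b < c → π c < π b → π b < π a → False)
    {i j : Fin n} (hij : i < j) (hj : ¬ IsRecord m j) : π i < π j := by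
  by_contra hlt
  have hne : π j ≠ π i := fun e => hij.ne' (π.injective e)
  have hji : π j < π i := lt_of_le_of_ne (not_lt.1 hlt) hne
  obtain ⟨k, hk, e⟩ := (h j).2
  have hne' : π j ≠ m j := fun e => hj ((h.record_iff j).2 e)
  have hkj : π k < π j := by
    rw [e]; exact lt_of_le_of_ne ((h j).1 j le_rfl) hne'.symm
  refine ha i j k hij (lt_of_le_of_ne hk ?_) hkj hji
  rintro rfl
  exact hkj.ne rfl

end IsSuffixMin

/-! ### A `321`-avoiding permutation is determined by its suffix minima -/

lemma eq_of_isSuffixMin {n : ℕ} {π σ : Equiv.Perm (Fin n)} {m : Fin n → Fin n}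
    (hπ : IsSuffixMin π m) (hσ : IsSuffixMin σ m)
    (aπ : ∀ a b c, a < b → b < c → π c < π b → π b < π a → False)
    (aσ : ∀ a b c, a < b → b < c → σ c < σ b → σ b < σ a → False) : π = σ := by
  -- At the first disagreement `i`, say `π i < σ i`, the value `π i` is taken by `σ` at a later
  -- position `j`; it must be a record, where `π` and `σ` agree.
  have step : ∀ (π σ : Equiv.Perm (Fin n)), IsSuffixMin π m → IsSuffixMin σ m →
      (∀ a b c, a < b → b < c → σ c < σ b → σ b < σ a → False) →
      ∀ i, (∀ j, j < i → π j = σ j) → ¬ π i < σ i := by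
    intro π σ hπ hσ aσ i ih hlt
    obtain ⟨j, hj⟩ := σ.surjective (π i)
    rcases lt_trichotomy j i with h | h | h
    · exact h.ne (π.injective ((ih j h).trans hj))
    · subst h; exact hlt.ne' hj
    · by_cases hr : IsRecord m j
      · have e := ((hπ.record_iff j).1 hr).trans ((hσ.record_iff j).1 hr).symm
        exact h.ne' (π.injective (e.trans hj))
      · exact absurd (hσ.strictMono_off_records aσ h hr) (by rw [hj]; exact not_lt.2 hlt.le)
  ext i : 1
  induction i using WellFoundedLT.induction with
  | ind i ih =>
    exact le_antisymm (not_lt.1 (step σ π hσ hπ aπ i fun j hj => (ih j hj).symm))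
      (not_lt.1 (step π σ hπ hσ aσ i ih))

/-! ### Constructing a permutation with given suffix minima -/

/-- Every value of `m` is taken at a record: the last position with that value. -/
lemma exists_record {n : ℕ} {m : Fin n → Fin n} (hm : Monotone m) (i : Fin n) :
    ∃ j, i ≤ j ∧ IsRecord m j ∧ m j = m i := by
  obtain ⟨j, hj, hmax⟩ := Finset.exists_max_image
    (Finset.univ.filter fun j => i ≤ j ∧ m j = m i) id ⟨i, by simp⟩
  simp only [Finset.mem_filter, Finset.mem_univ, true_and, id] at hj hmax
  refine ⟨j, hj.1, fun k hk => lt_of_le_of_ne (hm hk.le) fun e => ?_, hj.2⟩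
  exact absurd (hmax k ⟨hj.1.trans hk.le, e ▸ hj.2⟩) (not_le.2 hk)

lemma exists_perm_isSuffixMin {n : ℕ} {m : Fin n → Fin n} (hm : Monotone m)
    (hle : ∀ i, m i ≤ i) :
    ∃ π : Equiv.Perm (Fin n), IsSuffixMin π m ∧
      ∀ a b c, a < b → b < c → π c < π b → π b < π a → False := by
  classical
  let q : Fin n → Prop := fun v => ∃ i, m i = v
  let e₀ : {i // IsRecord m i} → {v // q v} := fun i => ⟨m i, i, rfl⟩
  have he₀ : Function.Bijective e₀ := by
    constructor
    · rintro ⟨i, hi⟩ ⟨j, hj⟩ h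
      have h' : m i = m j := congrArg Subtype.val h
      rcases lt_trichotomy i j with hlt | hlt | hlt
      · exact absurd (hi j hlt) (by simp [h'])
      · exact Subtype.ext hlt
      · exact absurd (hj i hlt) (by simp [h'])
    · rintro ⟨_, i, rfl⟩
      obtain ⟨j, -, hj, e⟩ := exists_record hm i
      exact ⟨⟨j, hj⟩, Subtype.ext e⟩
  let e := Equiv.ofBijective e₀ he₀
  have hcard : Fintype.card {i // ¬ IsRecord m i} = Fintype.card {v // ¬ q v} :=
    Fintype.card_compl_eq_card_compl _ _ (Fintype.card_congr e)
  let f : {i // ¬ IsRecord m i} ≃o {v // ¬ q v} :=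
    (Fintype.orderIsoFinOfCardEq _ hcard).symm.trans (Fintype.orderIsoFinOfCardEq _ rfl)
  let π : Equiv.Perm (Fin n) := Equiv.subtypeCongr e f.toEquiv
  have hrec : ∀ i, IsRecord m i → π i = m i := by
    intro i hi
    simp [π, Equiv.subtypeCongr, Equiv.sumCompl_symm_apply_of_pos hi, e, e₀]
  have hnon : ∀ i j, ¬ IsRecord m i → ¬ IsRecord m j → i < j → π i < π j := by
    intro i j hi hj hij
    simp only [π, Equiv.subtypeCongr, Equiv.trans_apply,
      Equiv.sumCompl_symm_apply_of_neg hi, Equiv.sumCompl_symm_apply_of_neg hj]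
    exact f.strictMono (a := ⟨i, hi⟩) (b := ⟨j, hj⟩) hij
  have hrec' : ∀ i j, IsRecord m i → IsRecord m j → i < j → π i < π j := by
    intro i j hi hj hij
    rw [hrec i hi, hrec j hj]
    exact hi j hij
  have hge : ∀ i, m i ≤ π i := by
    intro i
    by_cases hi : IsRecord m i
    · exact (hrec i hi).ge
    · by_contra hlt
      rw [not_le] at hlt
      -- Otherwise `π` injects the `i + 1` positions `≤ i` into the `m i ≤ i` values `< m i`.
      have hc : (Finset.Iic i).card ≤ (Finset.Iio (m i)).card := by
        refine Finset.card_le_card_of_injOn π (fun j hj => ?_) π.injective.injOn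
        have hj : j ≤ i := by simpa using hj
        have : π j < m i := by
          rcases hj.eq_or_lt with rfl | hji
          · exact hlt
          · by_cases hr : IsRecord m j
            · rw [hrec j hr]; exact hr i hji
            · exact (hnon j i hr hi hji).trans hlt
        simpa using this
      have := Fin.le_def.1 (hle i)
      simp only [Fin.card_Iic, Fin.card_Iio] at hc
      omega
  refine ⟨π, fun i => ⟨fun j hj => (hm hj).trans (hge j), ?_⟩, ?_⟩
  · obtain ⟨j, hj, hr, e⟩ := exists_record hm i
    exact ⟨j, hj, (hrec j hr).trans e⟩
  · -- Two of the three positions lie in the same increasing subsequence.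
    intro a b c hab hbc h1 h2
    have hac := hab.trans hbc
    have h3 := h1.trans h2
    by_cases ra : IsRecord m a <;> by_cases rb : IsRecord m b <;> by_cases rc : IsRecord m c
    all_goals first
      | exact absurd (hrec' a b ra rb hab) h2.not_gt
      | exact absurd (hnon a b ra rb hab) h2.not_gt
      | exact absurd (hrec' b c rb rc hbc) h1.not_gt
      | exact absurd (hnon b c rb rc hbc) h1.not_gt
      | exact absurd (hrec' a c ra rc hac) h3.not_gt
      | exact absurd (hnon a c ra rc hac) h3.not_gt

/-! ### Fixed points and isolated indices -/

/-- A fixed point of a `321`-avoiding permutation has no smaller value to its right. -/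
lemma lt_of_fixed {n : ℕ} {π : Equiv.Perm (Fin n)}
    (ha : ∀ a b c, a < b → b < c → π c < π b → π b < π a → False)
    {i j : Fin n} (hi : π i = i) (hij : i < j) : i < π j := by
  by_contra hlt
  have hji : π j < π i := lt_of_le_of_ne (by rw [hi]; exact not_lt.1 hlt)
    fun e => hij.ne' (π.injective e)
  -- By `321`-avoidance `π` injects the positions `< i` together with `j` into the values `< i`.
  have hc : (insert j (Finset.Iio i)).card ≤ (Finset.Iio i).card := by
    refine Finset.card_le_card_of_injOn π (fun k hk => ?_) π.injective.injOn
    have hk : k = j ∨ k < i := by simpa using hk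
    have : π k < i := by
      rcases hk with rfl | hk
      · simpa [hi] using hji
      · by_contra hge
        refine ha k i j hk hij hji (lt_of_le_of_ne (by rw [hi]; exact not_lt.1 hge) ?_)
        exact fun e => hk.ne' (π.injective e)
    simpa using this
  rw [Finset.card_insert_of_notMem (by simpa using hij.le)] at hc
  omega

lemma fixed_iff_isolated {n : ℕ} {π : Equiv.Perm (Fin n)} {m : Fin n → Fin n}
    (h : IsSuffixMin π m)
    (ha : ∀ a b c, a < b → b < c → π c < π b → π b < π a → False) (i : Fin n) :
    π i = i ↔ IsIsolated (fun i : Fin n => i.1 - (m i).1) i := by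
  have hle := fun i => Fin.le_def.1 (h.le_self i)
  constructor
  · intro hi
    constructor
    · obtain ⟨j, hj, e⟩ := (h i).2
      have : i ≤ m i := by
        rw [← e]
        rcases hj.eq_or_lt with rfl | hlt
        · exact hi.ge
        · exact (lt_of_fixed ha hi hlt).le
      exact Nat.sub_eq_zero_of_le this
    · intro hn
      obtain ⟨j, hj, e⟩ := (h ⟨i.1 + 1, hn⟩).2
      have hlt := lt_of_fixed ha hi (j := j) (Fin.lt_def.2 (Nat.lt_of_succ_le hj))
      rw [e] at hlt
      exact Nat.sub_eq_zero_of_le (Nat.succ_le_of_lt hlt)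
  · rintro ⟨h0, h1⟩
    have hmi : m i = i := Fin.ext (le_antisymm (hle i) (Nat.sub_eq_zero_iff_le.1 h0))
    obtain ⟨j, hj, e⟩ := (h i).2
    rcases hj.eq_or_lt with rfl | hlt
    · rw [e, hmi]
    · have hlt' : i.1 + 1 ≤ j.1 := hlt
      have hn : i.1 + 1 < n := hlt'.trans_lt j.2
      have hs := Nat.sub_eq_zero_iff_le.1 (h1 hn)
      have hj' := Fin.le_def.1 ((h ⟨i.1 + 1, hn⟩).1 j hlt')
      rw [e, hmi] at hj'
      simp only at hs hj'
      omega

/-! ### Similarity-relation sequences -/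

lemma isSR_of_isSuffixMin {n : ℕ} {π : Equiv.Perm (Fin n)} {m : Fin n → Fin n}
    (h : IsSuffixMin π m) : IsSR (fun i : Fin n => i.1 - (m i).1) := by
  refine ⟨fun _ => by simp, fun i hi => ?_⟩
  have := Fin.le_def.1 (h.monotone (a := i) (b := ⟨i.1 + 1, hi⟩) (Fin.le_def.2 (by simp)))
  simp only
  omega

/-- Similarity-relation sequences are the sequences `i - m i` with `m` weakly increasing and
`m i ≤ i`. -/
lemma exists_of_isSR {n : ℕ} {r : Fin n → ℕ} (hr : IsSR r) :
    ∃ m : Fin n → Fin n, Monotone m ∧ (∀ i, m i ≤ i) ∧ (fun i : Fin n => i.1 - (m i).1) = r := by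
  have hle : ∀ k (hk : k < n), r ⟨k, hk⟩ ≤ k := by
    intro k
    induction k with
    | zero => intro hk; exact (hr.1 hk).le
    | succ k ih => intro hk; exact (hr.2 ⟨k, by omega⟩ hk).trans (Nat.succ_le_succ (ih _))
  have hmono : ∀ d k (hk : k + d < n), k - r ⟨k, by omega⟩ ≤ k + d - r ⟨k + d, hk⟩ := by
    intro d
    induction d with
    | zero => intro k hk; exact le_rfl
    | succ d ih =>
      intro k hk
      refine (ih k (by omega)).trans ?_
      have h1 := hr.2 ⟨k + d, by omega⟩ hk
      have h2 := hle (k + d) (by omega)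
      have h3 : r ⟨k + (d + 1), hk⟩ ≤ r ⟨k + d, by omega⟩ + 1 := h1
      omega
  refine ⟨fun i => ⟨i.1 - r i, by omega⟩, ?_, fun i => Fin.le_def.2 (Nat.sub_le _ _), ?_⟩
  · rintro ⟨a, ha⟩ ⟨b, hb⟩ hab
    obtain ⟨d, rfl⟩ := Nat.exists_eq_add_of_le (Fin.le_def.1 hab)
    exact hmono d a hb
  · funext i
    have := hle i.1 i.2
    simp only [Fin.eta] at this ⊢
    omega

lemma fpCount_eq_zero_iff {n : ℕ} (π : Equiv.Perm (Fin n)) : fpCount π = 0 ↔ ∀ i, π i ≠ i := by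
  simp [fpCount, Nat.card_eq_fintype_card, Fintype.card_eq_zero_iff, isEmpty_subtype]

/-- The number of 321-avoiding derangements of `{1,…,n}` equals the `n`-th Fine number. -/
theorem d_n_321_eq_fine (n : ℕ) (hn : 1 ≤ n) :
    sCount n 0 ![2, 1, 0] = Fine n := by
  choose m hm using fun π : Equiv.Perm (Fin n) => exists_isSuffixMin π
  refine Nat.card_eq_of_bijective
    (fun π => ⟨fun i : Fin n => i.1 - (m π.1 i).1, isSR_of_isSuffixMin (hm _), fun i hi =>
      (fpCount_eq_zero_iff _).1 π.2.2 i
        ((fixed_iff_isolated (hm _) ((avoids_321_iff _).1 π.2.1) i).2 hi)⟩) ⟨?_, ?_⟩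
  · rintro ⟨π, aπ, _⟩ ⟨σ, aσ, _⟩ heq
    have hms : m π = m σ := by
      funext i
      have h : i.1 - (m π i).1 = i.1 - (m σ i).1 := congrFun (congrArg Subtype.val heq) i
      have h1 := Fin.le_def.1 ((hm π).le_self i)
      have h2 := Fin.le_def.1 ((hm σ).le_self i)
      exact Fin.ext (by omega)
    exact Subtype.ext (eq_of_isSuffixMin (hm π) (hms ▸ hm σ)
      ((avoids_321_iff _).1 aπ) ((avoids_321_iff _).1 aσ))
  · rintro ⟨r, hr, hiso⟩
    obtain ⟨μ, hmono, hle, rfl⟩ := exists_of_isSR hr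
    obtain ⟨π, hπ, aπ⟩ := exists_perm_isSuffixMin hmono hle
    refine ⟨⟨π, (avoids_321_iff _).2 aπ, (fpCount_eq_zero_iff _).2 fun i hi =>
      hiso i ((fixed_iff_isolated hπ aπ i).1 hi)⟩, Subtype.ext ?_⟩
    simp only [(hm π).unique hπ]
end

section
/- For all n ≥ 0 and 0 ≤ k ≤ n, the number of 321-avoiding permutations of {1,…,n} with exactly k fixed points equals the number of similarity-relation sequences in SR_n with exactly k isolated indices, i.e., s_n^k(321) = |SR_n(k)|. -/
/-! The bijection goes through suffix minima.  For a permutation `π` of `{0, …, n-1}` put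
`s i = min {π j | j ≥ i}`.  Then `s` is weakly increasing and `s i ≤ i`, so `r i = i - s i` is a
similarity-relation sequence, and every such sequence comes from a unique `s` of this kind.

* `π ↦ s` is injective on 321-avoiding permutations: the positions with `π i = s i`
  (right-to-left minima) are those where `s` is about to jump, hence are determined by `s`, and
  avoidance of 321 forces `π` to be increasing on the other positions.
* `π ↦ s` is surjective: let `M` be the set of jump positions of `s`, put `π i = s i` on `M`, and
  extend increasingly from the complement of `M` to the complement of `s(M)`.  The result is a
  union of two increasing sequences, so it avoids 321, and counting gives `s i ≤ π i`.
* If `π` avoids 321, a fixed point `i` splits `π` into a permutation of `{0, …, i-1}` and one of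
  `{i+1, …, n-1}`; this says that `s i = i` and `s (i+1) = i+1` (or `i` is last), i.e. that `i`
  is isolated in `r`.
-/


open Finset Polynomial

/-- `SRcount n k` = number of similarity-relation sequences of length `n` with exactly
`k` isolated indices. -/
noncomputable def SRcount (n k : ℕ) : ℕ :=
  Nat.card {r : Fin n → ℕ // IsSR r ∧ Nat.card {i : Fin n // IsIsolated r i} = k}

/-! ### Suffix minima -/

/-- A decreasing triple of values of `π`, the form in which the pattern 321 is used below. -/
lemma containsPat_321_iff {n : ℕ} (π : Equiv.Perm (Fin n)) :
    ContainsPat π ![2, 1, 0] ↔ ∃ a b c, a < b ∧ b < c ∧ π b < π a ∧ π c < π b := by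
  constructor
  · rintro ⟨f, hf, h⟩
    refine ⟨f 0, f 1, f 2, hf (by decide), hf (by decide), ?_, ?_⟩
    · rw [h]; decide
    · rw [h]; decide
  · rintro ⟨a, b, c, hab, hbc, h1, h2⟩
    refine ⟨![a, b, c], ?_, ?_⟩
    · intro x y hxy
      fin_cases x <;> fin_cases y <;> simp_all
      exact hab.trans hbc
    · have h3 := h2.trans h1
      intro x y
      fin_cases x <;> fin_cases y <;> simp [h1, h2, h3, h1.le, h2.le, h3.le]

/-- The suffix minimum `min {π j | j ≥ i}`. -/
def sufMin {n : ℕ} (π : Equiv.Perm (Fin n)) (i : Fin n) : Fin n :=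
  (Finset.Ici i).inf' ⟨i, by simp⟩ π

section
variable {n : ℕ} (π : Equiv.Perm (Fin n))

lemma sufMin_le {i j : Fin n} (h : i ≤ j) : sufMin π i ≤ π j :=
  Finset.inf'_le _ (by simpa using h)

lemma exists_sufMin (i : Fin n) : ∃ j, i ≤ j ∧ π j = sufMin π i := by
  obtain ⟨j, hj, h⟩ := Finset.exists_mem_eq_inf' (s := Finset.Ici i) ⟨i, by simp⟩ π
  exact ⟨j, by simpa using hj, h.symm⟩

lemma sufMin_mono : Monotone (sufMin π) := by
  intro i j h
  obtain ⟨k, hk, e⟩ := exists_sufMin π j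
  exact e ▸ sufMin_le π (h.trans hk)

/-- The `n - i` values at positions `≥ i` cannot all exceed `i`. -/
lemma sufMin_le_self (i : Fin n) : sufMin π i ≤ i := by
  by_contra! h
  have : (Finset.Ici i).card ≤ (Finset.Ioi i).card :=
    Finset.card_le_card_of_injOn π
      (fun j hj => by
        have hj' : i ≤ j := by simpa using hj
        simpa using h.trans_le (sufMin_le π hj'))
      π.injective.injOn
  rw [Fin.card_Ici, Fin.card_Ioi] at this
  have := i.2
  omega

/-- Right-to-left minima are the positions where the suffix minimum is about to jump, so they
depend on `π` only through `sufMin π`. -/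
lemma eq_sufMin_iff (i : Fin n) : π i = sufMin π i ↔ ∀ j, i < j → sufMin π i < sufMin π j := by
  constructor
  · intro h j hj
    obtain ⟨k, hk, e⟩ := exists_sufMin π j
    have hik := hj.trans_le hk
    refine lt_of_le_of_ne (sufMin_mono π hj.le) ?_
    rw [← h, ← e]
    exact fun e' => hik.ne (π.injective e')
  · intro h
    obtain ⟨k, hk, e⟩ := exists_sufMin π i
    rcases hk.eq_or_lt with rfl | hk
    · exact e
    · exact absurd ((h k hk).trans_le (sufMin_le π le_rfl)) (by rw [e]; exact lt_irrefl _)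

end

/-! ### Injectivity -/

/-- If `ρ` avoids 321 and `π` has the same suffix minima, then `π` is not smaller than `ρ` at the
first position where they differ: otherwise the value `π i` occurs in `ρ` to the right of `i`, at
a position that is not a right-to-left minimum, which completes a pattern 321. -/
lemma not_lt_of_sufMin_eq {n : ℕ} {π ρ : Equiv.Perm (Fin n)}
    (hρ : AvoidsPat ρ ![2, 1, 0]) (h : sufMin π = sufMin ρ) (i : Fin n)
    (hi : ∀ j < i, π j = ρ j) : ¬ π i < ρ i := by
  intro hlt
  obtain ⟨j, hj⟩ := ρ.surjective (π i)
  have hij : i < j := by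
    rcases lt_trichotomy j i with h' | rfl | h'
    · exact absurd (π.injective ((hi j h').trans hj)) h'.ne
    · exact absurd hj hlt.ne'
    · exact h'
  have hjN : ρ j ≠ sufMin ρ j := by
    intro hM
    have hM' : π j = sufMin π j := by
      rw [eq_sufMin_iff, h, ← eq_sufMin_iff]
      exact hM
    have : π j = π i := by rw [hM', h, ← hM, hj]
    exact hij.ne' (π.injective this)
  obtain ⟨k, hk, e⟩ := exists_sufMin ρ j
  have hjk : j < k := lt_of_le_of_ne hk (by rintro rfl; exact hjN e)
  refine hρ ((containsPat_321_iff ρ).2 ⟨i, j, k, hij, hjk, hj ▸ hlt, ?_⟩)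
  exact e ▸ lt_of_le_of_ne (sufMin_le ρ le_rfl) hjN.symm

lemma eq_of_sufMin_eq {n : ℕ} {π ρ : Equiv.Perm (Fin n)} (hπ : AvoidsPat π ![2, 1, 0])
    (hρ : AvoidsPat ρ ![2, 1, 0]) (h : sufMin π = sufMin ρ) : π = ρ := by
  ext1 i
  induction i using WellFoundedLT.induction with
  | ind i ih =>
    exact le_antisymm
      (not_lt.1 (not_lt_of_sufMin_eq hπ h.symm i fun j hj => (ih j hj).symm))
      (not_lt.1 (not_lt_of_sufMin_eq hρ h i ih))

/-! ### Surjectivity -/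

/-- A map that is injective on `M` extends from `M` to a permutation increasing off `M`. -/
lemma exists_perm_extend {n : ℕ} (M : Finset (Fin n)) (s : Fin n → Fin n)
    (hs : Set.InjOn s M) :
    ∃ π : Equiv.Perm (Fin n), (∀ i ∈ M, π i = s i) ∧
      ∀ i j, i ∉ M → j ∉ M → i < j → π i < π j := by
  classical
  have hc : (M.image s)ᶜ.card = Mᶜ.card := by
    rw [Finset.card_compl, Finset.card_compl, Finset.card_image_of_injOn hs]
  let f : (Mᶜ : Finset (Fin n)) ≃o ((M.image s)ᶜ : Finset (Fin n)) :=
    (Mᶜ.orderIsoOfFin rfl).symm.trans ((M.image s)ᶜ.orderIsoOfFin hc)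
  let g : Fin n → Fin n := fun i =>
    if h : i ∈ M then s i else f ⟨i, Finset.mem_compl.2 h⟩
  have gM : ∀ i ∈ M, g i = s i := fun i h => dif_pos h
  have gN : ∀ i (h : i ∉ M), g i = f ⟨i, Finset.mem_compl.2 h⟩ := fun i h => dif_neg h
  have hN : ∀ i ∉ M, g i ∉ M.image s := fun i h => by
    rw [gN i h]
    exact Finset.mem_compl.1 (f _).2
  have hg : Function.Injective g := by
    intro i j hij
    by_cases hi : i ∈ M <;> by_cases hj : j ∈ M
    · rw [gM i hi, gM j hj] at hij
      exact hs hi hj hij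
    · exact absurd (Finset.mem_image.2 ⟨i, hi, (gM i hi).symm.trans hij⟩) (hN j hj)
    · exact absurd (Finset.mem_image.2 ⟨j, hj, (gM j hj).symm.trans hij.symm⟩) (hN i hi)
    · rw [gN i hi, gN j hj] at hij
      simpa using f.injective (Subtype.ext hij)
  refine ⟨Equiv.ofBijective g (Finite.injective_iff_bijective.1 hg), gM, ?_⟩
  intro i j hi hj hij
  change g i < g j
  rw [gN i hi, gN j hj]
  exact f.strictMono (a := ⟨i, _⟩) (b := ⟨j, _⟩) hij

lemma exists_sufMin_eq {n : ℕ} (s : Fin n → Fin n) (hm : Monotone s) (hs : ∀ i, s i ≤ i) :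
    ∃ π : Equiv.Perm (Fin n), AvoidsPat π ![2, 1, 0] ∧ sufMin π = s := by
  classical
  let M : Finset (Fin n) := Finset.univ.filter fun i => ∀ j, i < j → s i < s j
  have hM : ∀ i, i ∈ M ↔ ∀ j, i < j → s i < s j := fun i => by simp [M]
  have hinj : Set.InjOn s M := by
    intro i hi j hj e
    rcases lt_trichotomy i j with h | h | h
    · exact absurd e ((hM i).1 hi j h).ne
    · exact h
    · exact absurd e ((hM j).1 hj i h).ne'
  obtain ⟨π, hπM, hπN⟩ := exists_perm_extend M s hinj
  have hle : ∀ j, s j ≤ π j := by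
    intro j
    by_cases hj : j ∈ M
    · exact (hπM j hj).ge
    -- If `π j < s j`, then `π` maps the `j + 1` positions `≤ j` into the values `< s j ≤ j`.
    by_contra! hlt
    have : (Finset.Iic j).card ≤ (Finset.Iio (s j)).card := by
      refine Finset.card_le_card_of_injOn π (fun i hi => ?_) π.injective.injOn
      have hi' : i ≤ j := by simpa using hi
      suffices π i < s j by simpa using this
      rcases hi'.eq_or_lt with rfl | hi'
      · exact hlt
      by_cases hiM : i ∈ M
      · rw [hπM i hiM]
        exact (hM i).1 hiM j hi'
      · exact (hπN i j hiM hj hi').trans hlt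
    rw [Fin.card_Iic, Fin.card_Iio] at this
    have h2 : (s j).1 ≤ j.1 := hs j
    omega
  refine ⟨π, ?_, ?_⟩
  · intro hc
    obtain ⟨a, b, c, hab, hbc, h1, h2⟩ := (containsPat_321_iff π).1 hc
    have key : ∀ i j, i < j → π j < π i → ¬ (i ∈ M ↔ j ∈ M) := by
      intro i j hij hlt hiff
      by_cases hi : i ∈ M
      · have hj := hiff.1 hi
        rw [hπM i hi, hπM j hj] at hlt
        exact absurd ((hM i).1 hi j hij) hlt.not_gt
      · exact absurd (hπN i j hi (fun h => hi (hiff.2 h)) hij) hlt.not_gt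
    have k1 := key a b hab h1
    have k2 := key b c hbc h2
    have k3 := key a c (hab.trans hbc) (h2.trans h1)
    tauto
  · funext i
    apply le_antisymm
    · -- The last position of the plateau of `s` containing `i` lies in `M`.
      obtain ⟨k, hk, hmax⟩ := Finset.exists_max_image
        (Finset.univ.filter fun k => s k = s i) (fun k => k) ⟨i, by simp⟩
      have hki : s k = s i := by simpa using hk
      have hik : i ≤ k := hmax i (by simp)
      have hkM : k ∈ M := (hM k).2 fun j hj => by
        refine lt_of_le_of_ne (hm hj.le) fun e => ?_
        exact absurd (hmax j (by simp [← e, hki])) hj.not_ge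
      rw [← hki, ← hπM k hkM]
      exact sufMin_le π hik
    · obtain ⟨j, hj, e⟩ := exists_sufMin π i
      exact e ▸ (hm hj).trans (hle j)

/-! ### Similarity-relation sequences -/

/-- The similarity-relation sequence `i ↦ i - min {π j | j ≥ i}` of a permutation; the
subtraction does not truncate, by `sufMin_le_self`. -/
def toSR {n : ℕ} (π : Equiv.Perm (Fin n)) (i : Fin n) : ℕ := i.1 - (sufMin π i).1

lemma isSR_toSR {n : ℕ} (π : Equiv.Perm (Fin n)) : IsSR (toSR π) := by
  refine ⟨fun h => by simp [toSR], fun i h => ?_⟩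
  have hm : (sufMin π i).1 ≤ (sufMin π ⟨i.1 + 1, h⟩).1 :=
    sufMin_mono π (Fin.mk_le_mk.2 (Nat.le_succ i.1) : i ≤ ⟨i.1 + 1, h⟩)
  simp only [toSR]
  omega

lemma toSR_eq_zero_iff {n : ℕ} (π : Equiv.Perm (Fin n)) (i : Fin n) :
    toSR π i = 0 ↔ sufMin π i = i := by
  have : (sufMin π i).1 ≤ i.1 := sufMin_le_self π i
  rw [Fin.ext_iff, toSR]
  omega

lemma sufMin_eq_of_toSR_eq {n : ℕ} {π ρ : Equiv.Perm (Fin n)} (h : toSR π = toSR ρ) :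
    sufMin π = sufMin ρ := by
  funext i
  have h1 : (sufMin π i).1 ≤ i.1 := sufMin_le_self π i
  have h2 : (sufMin ρ i).1 ≤ i.1 := sufMin_le_self ρ i
  have h3 := congrFun h i
  simp only [toSR] at h3
  exact Fin.ext (by omega)

lemma IsSR.le_index {n : ℕ} {r : Fin n → ℕ} (hr : IsSR r) (i : ℕ) (hi : i < n) :
    r ⟨i, hi⟩ ≤ i := by
  induction i with
  | zero => exact (hr.1 hi).le
  | succ i ih =>
    have := hr.2 ⟨i, by omega⟩ hi
    have := ih (by omega)
    simp only at *
    omega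

lemma exists_toSR_eq {n : ℕ} {r : Fin n → ℕ} (hr : IsSR r) :
    ∃ π : Equiv.Perm (Fin n), AvoidsPat π ![2, 1, 0] ∧ toSR π = r := by
  have hstep : ∀ d i : ℕ, ∀ (hi : i < n) (hd : i + d < n),
      r ⟨i + d, hd⟩ ≤ r ⟨i, hi⟩ + d := by
    intro d
    induction d with
    | zero => intro i hi hd; exact le_rfl
    | succ d ih =>
      intro i hi hd
      have h1 := ih i hi (by omega)
      have h2 := hr.2 ⟨i + d, by omega⟩ hd
      have h3 : r ⟨i + (d + 1), hd⟩ ≤ r ⟨i + d, by omega⟩ + 1 := h2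
      omega
  obtain ⟨π, hπ, h⟩ := exists_sufMin_eq (fun i : Fin n => (⟨i.1 - r i, by omega⟩ : Fin n))
    (by
      intro i j hij
      have hij' : i.1 ≤ j.1 := hij
      obtain ⟨d, hd⟩ := Nat.exists_eq_add_of_le hij'
      have h1 := hstep d i.1 i.2 (by omega)
      have h2 : (⟨i.1 + d, by omega⟩ : Fin n) = j := Fin.ext hd.symm
      rw [h2] at h1
      have h3 : r j ≤ r i + d := h1
      have h4 := hr.le_index i.1 i.2
      have h5 : r i ≤ i.1 := h4
      simp only [Fin.mk_le_mk]
      omega)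
    (fun i => Fin.mk_le_mk.2 (Nat.sub_le _ _))
  refine ⟨π, hπ, ?_⟩
  funext i
  have h4 : r i ≤ i.1 := hr.le_index i.1 i.2
  rw [toSR, h]
  simp only
  omega

/-! ### Fixed points and isolated indices -/

/-- A fixed point of a 321-avoiding permutation has only larger values to its right. -/
lemma sufMin_eq_of_fixed {n : ℕ} {π : Equiv.Perm (Fin n)} (hπ : AvoidsPat π ![2, 1, 0])
    {i : Fin n} (hi : π i = i) : sufMin π i = i := by
  refine le_antisymm (sufMin_le_self π i) ?_
  obtain ⟨j, hj, e⟩ := exists_sufMin π i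
  rw [← e]
  by_contra! hlt
  have hij : i < j := lt_of_le_of_ne hj (by rintro rfl; exact hlt.ne hi)
  -- By pigeonhole, a value `< i` right of `i` comes with a value `> i` left of `i`.
  have : ∃ h, h < i ∧ i < π h := by
    by_contra! hno
    have hc : (insert j (Finset.Iio i)).card ≤ (Finset.Iio i).card := by
      refine Finset.card_le_card_of_injOn π (fun k hk => ?_) π.injective.injOn
      have hk' : k = j ∨ k < i := by simpa using hk
      suffices π k < i by simpa using this
      rcases hk' with rfl | hk'
      · exact hlt
      · refine lt_of_le_of_ne (hno k hk') fun e' => hk'.ne (π.injective (e'.trans hi.symm))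
    rw [Finset.card_insert_of_notMem (by simpa using hij.le)] at hc
    omega
  obtain ⟨h, hh, hh'⟩ := this
  exact hπ ((containsPat_321_iff π).2
    ⟨h, i, j, hh, hij, by rwa [hi], by rwa [hi]⟩)

lemma isIsolated_toSR_iff {n : ℕ} {π : Equiv.Perm (Fin n)} (hπ : AvoidsPat π ![2, 1, 0])
    (i : Fin n) : IsIsolated (toSR π) i ↔ π i = i := by
  simp only [IsIsolated, toSR_eq_zero_iff]
  constructor
  · rintro ⟨h1, h2⟩
    obtain ⟨j, hj, e⟩ := exists_sufMin π i
    rw [h1] at e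
    rcases hj.eq_or_lt with rfl | hj
    · exact e
    · have hj' : i.1 < j.1 := hj
      have hlt : i.1 + 1 < n := by omega
      have h3 : sufMin π ⟨i.1 + 1, hlt⟩ ≤ π j := sufMin_le π (Fin.mk_le_of_le_val hj')
      rw [h2 hlt, e] at h3
      have h4 : i.1 + 1 ≤ i.1 := h3
      omega
  · intro hi
    have h1 := sufMin_eq_of_fixed hπ hi
    refine ⟨h1, fun h => le_antisymm (sufMin_le_self π _) ?_⟩
    obtain ⟨j, hj, e⟩ := exists_sufMin π ⟨i.1 + 1, h⟩
    have hij : i < j := lt_of_lt_of_le (Fin.mk_lt_mk.2 (Nat.lt_succ_self i.1)) hj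
    have h2 : i < π j := by
      refine lt_of_le_of_ne (h1 ▸ sufMin_le π hij.le) fun e' => ?_
      exact hij.ne (π.injective (hi.trans e'))
    rw [← e]
    exact h2

lemma card_isIsolated_toSR {n : ℕ} {π : Equiv.Perm (Fin n)} (hπ : AvoidsPat π ![2, 1, 0]) :
    Nat.card {i : Fin n // IsIsolated (toSR π) i} = fpCount π :=
  Nat.card_congr (Equiv.subtypeEquivRight (isIsolated_toSR_iff hπ))

/-- `s_n^k(321) = |SR_n(k)|`. -/
theorem s_n_k_321_eq_SR (n k : ℕ) (hk : k ≤ n) :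
    sCount n k ![2, 1, 0] = SRcount n k := by
  refine Nat.card_eq_of_bijective
    (fun π : {π : Equiv.Perm (Fin n) // AvoidsPat π ![2, 1, 0] ∧ fpCount π = k} =>
      (⟨toSR π.1, isSR_toSR π.1, (card_isIsolated_toSR π.2.1).trans π.2.2⟩ :
        {r : Fin n → ℕ // IsSR r ∧ Nat.card {i : Fin n // IsIsolated r i} = k})) ⟨?_, ?_⟩
  · intro π ρ h
    exact Subtype.ext (eq_of_sufMin_eq π.2.1 ρ.2.1
      (sufMin_eq_of_toSR_eq (congrArg Subtype.val h)))
  · rintro ⟨r, hr, hk'⟩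
    obtain ⟨π, hπ, rfl⟩ := exists_toSR_eq hr
    exact ⟨⟨π, hπ, (card_isIsolated_toSR hπ).symm.trans hk'⟩, rfl⟩
end

section
/- For every n ≥ 1, the number of sequences in SR_n with no isolated index equals the number of hill-free Dyck paths of length 2n, i.e., |SR_n(0)| = |Dyck^{hf}(2n)|. -/
/-!
The bijection reads a Dyck path and records the height at which each up-step starts.  A sequence
`r₁ ⋯ rₙ` corresponds to the path `U D^(r₁+1-r₂) U D^(r₂+1-r₃) ⋯ U D^(rₙ+1)`, and the condition
`r_{i+1} ≤ r_i + 1` says exactly that the exponents are nonnegative.  The index `i` is isolated iff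
the `i`-th up-step starts at height `0` and is followed by exactly one down-step, that is, iff that
up-step begins a hill.

To make this amenable to induction, sequences and paths become lists, and everything is
generalised to start at an arbitrary height `h`: `toPath h` and `heights h` are then inverse to
each other (`heights_toPath`, `toPath_heights`), and they match isolated indices with hills
(`hillFreeFrom_toPath`).  The remaining lemmas translate between lists and functions on `Fin`.
-/

open Finset Polynomial

/-- Number of up-steps among the first `j` steps. -/
noncomputable def upsBefore {m : ℕ} (p : Fin m → Bool) (j : ℕ) : ℕ :=
  Nat.card {i : Fin m // i.1 < j ∧ p i = true}

/-- Number of down-steps among the first `j` steps. -/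
noncomputable def downsBefore {m : ℕ} (p : Fin m → Bool) (j : ℕ) : ℕ :=
  Nat.card {i : Fin m // i.1 < j ∧ p i = false}

/-- A Dyck path: never goes below the x-axis and ends at height `0`. -/
def IsDyck {m : ℕ} (p : Fin m → Bool) : Prop :=
  (∀ j ≤ m, downsBefore p j ≤ upsBefore p j) ∧ upsBefore p m = downsBefore p m

/-- Hill-free: no up-step starting at height `0` immediately followed by a down-step. -/
def HillFree {m : ℕ} (p : Fin m → Bool) : Prop :=
  ∀ (i : Fin m) (h : i.1 + 1 < m),
    ¬ (upsBefore p i.1 = downsBefore p i.1 ∧ p i = true ∧ p ⟨i.1 + 1, h⟩ = false)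

/-! ### List versions of the two families -/

/-- The list is a similarity-relation sequence continued from height `h`: its first entry is at
most `h`, and each later entry exceeds its predecessor by at most one. -/
def SRFrom : ℕ → List ℕ → Prop
  | _, [] => True
  | h, a :: l => a ≤ h ∧ SRFrom (a + 1) l

/-- No index of the list is isolated; the default value `0` accounts for the last index. -/
def NoIsolated : List ℕ → Prop
  | [] => True
  | a :: l => ¬ (a = 0 ∧ l.headD 0 = 0) ∧ NoIsolated l

/-- The word (`true` for up, `false` for down) is a nonnegative path from height `h` to `0`. -/
def DyckFrom : ℕ → List Bool → Prop
  | h, [] => h = 0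
  | h, true :: w => DyckFrom (h + 1) w
  | h, false :: w => 0 < h ∧ DyckFrom (h - 1) w

/-- The path starting at height `h` has no hill. It is only meaningful for words that stay
nonnegative, because of the truncated subtraction. -/
def HillFreeFrom : ℕ → List Bool → Prop
  | _, [] => True
  | h, true :: w => ¬ (h = 0 ∧ w.head? = some false) ∧ HillFreeFrom (h + 1) w
  | h, false :: w => HillFreeFrom (h - 1) w

/-! ### The bijection on lists -/

/-- The path from height `h` to `0` whose up-steps start at the heights listed. -/
def toPath : ℕ → List ℕ → List Bool
  | h, [] => List.replicate h false
  | h, a :: l => List.replicate (h - a) false ++ true :: toPath (a + 1) l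

/-- The starting heights of the up-steps of a path that begins at height `h`. -/
def heights : ℕ → List Bool → List ℕ
  | _, [] => []
  | h, true :: w => h :: heights (h + 1) w
  | h, false :: w => heights (h - 1) w

lemma heights_replicate (k h : ℕ) (w : List Bool) :
    heights h (List.replicate k false ++ w) = heights (h - k) w := by
  induction k generalizing h with
  | zero => simp
  | succ k ih =>
    simp only [List.replicate_succ, List.cons_append, heights, ih]
    congr 1; omega

lemma hillFreeFrom_replicate (k h : ℕ) (w : List Bool) :
    HillFreeFrom h (List.replicate k false ++ w) ↔ HillFreeFrom (h - k) w := by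
  induction k generalizing h with
  | zero => simp
  | succ k ih =>
    simp only [List.replicate_succ, List.cons_append, HillFreeFrom, ih]
    rw [show h - 1 - k = h - (k + 1) by omega]

lemma dyckFrom_replicate (k h : ℕ) (w : List Bool) (hk : k ≤ h) :
    DyckFrom h (List.replicate k false ++ w) ↔ DyckFrom (h - k) w := by
  induction k generalizing h with
  | zero => simp
  | succ k ih =>
    simp only [List.replicate_succ, List.cons_append, DyckFrom]
    rw [ih _ (by omega), show h - 1 - k = h - (k + 1) by omega]
    exact and_iff_right (by omega)

lemma heights_toPath (h : ℕ) (l : List ℕ) (hl : SRFrom h l) : heights h (toPath h l) = l := by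
  induction l generalizing h with
  | nil => simpa [toPath, heights] using heights_replicate h h []
  | cons a l ih =>
    obtain ⟨ha, hl⟩ := hl
    rw [toPath, heights_replicate, Nat.sub_sub_self ha, heights, ih _ hl]

lemma dyckFrom_toPath (h : ℕ) (l : List ℕ) (hl : SRFrom h l) : DyckFrom h (toPath h l) := by
  induction l generalizing h with
  | nil =>
    have := dyckFrom_replicate h h [] le_rfl
    simpa [toPath, DyckFrom] using this
  | cons a l ih =>
    obtain ⟨ha, hl⟩ := hl
    rw [toPath, dyckFrom_replicate _ _ _ (by omega), Nat.sub_sub_self ha, DyckFrom]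
    exact ih _ hl

/-- The path from height `1` begins with a down-step exactly when the next up-step, if any,
starts at height `0`. -/
lemma head?_toPath_one (l : List ℕ) (hl : SRFrom 1 l) :
    (toPath 1 l).head? = some false ↔ l.headD 0 = 0 := by
  cases l with
  | nil => simp [toPath]
  | cons a l =>
    have ha : a ≤ 1 := hl.1
    interval_cases a <;> simp [toPath]

/-- Under the bijection, isolated indices become hills. -/
lemma hillFreeFrom_toPath (h : ℕ) (l : List ℕ) (hl : SRFrom h l) :
    HillFreeFrom h (toPath h l) ↔ NoIsolated l := by
  induction l generalizing h with
  | nil =>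
    have := hillFreeFrom_replicate h h []
    simpa [toPath, HillFreeFrom, NoIsolated] using this
  | cons a l ih =>
    obtain ⟨ha, hl⟩ := hl
    rw [toPath, hillFreeFrom_replicate, Nat.sub_sub_self ha, HillFreeFrom, ih _ hl, NoIsolated]
    refine and_congr_left fun _ => not_congr (and_congr_right fun h0 => ?_)
    subst h0
    exact head?_toPath_one l hl

lemma SRFrom.mono {h k : ℕ} (hk : h ≤ k) {l : List ℕ} (hl : SRFrom h l) : SRFrom k l := by
  cases l with
  | nil => trivial
  | cons a l => exact ⟨hl.1.trans hk, hl.2⟩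

lemma toPath_succ (h : ℕ) (l : List ℕ) (hl : SRFrom h l) :
    toPath (h + 1) l = false :: toPath h l := by
  cases l with
  | nil => simp [toPath, List.replicate_succ]
  | cons a l => simp [toPath, Nat.succ_sub hl.1, List.replicate_succ]

lemma srFrom_heights (h : ℕ) (w : List Bool) : SRFrom h (heights h w) := by
  induction w generalizing h with
  | nil => trivial
  | cons b w ih =>
    cases b
    · exact (ih (h - 1)).mono (by omega)
    · exact ⟨le_rfl, ih _⟩

lemma toPath_heights (h : ℕ) (w : List Bool) (hw : DyckFrom h w) : toPath h (heights h w) = w := by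
  induction w generalizing h with
  | nil => simp [heights, toPath, show h = 0 from hw]
  | cons b w ih =>
    cases b
    · obtain ⟨h0, hw⟩ := hw
      obtain ⟨k, rfl⟩ : ∃ k, h = k + 1 := ⟨h - 1, by omega⟩
      rw [heights, Nat.add_sub_cancel, toPath_succ _ _ (srFrom_heights k w), ih k hw]
    · rw [heights, toPath, ih (h + 1) hw]
      simp

lemma length_toPath (h : ℕ) (l : List ℕ) (hl : SRFrom h l) :
    (toPath h l).length = 2 * l.length + h := by
  induction l generalizing h with
  | nil => simp [toPath]
  | cons a l ih =>
    have := hl.1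
    simp only [toPath, List.length_append, List.length_replicate, List.length_cons, ih _ hl.2]
    omega

/-- The bijection, restricted to the two families being counted. -/
def listEquiv (n : ℕ) :
    {l : List ℕ // l.length = n ∧ SRFrom 0 l ∧ NoIsolated l} ≃
      {w : List Bool // w.length = 2 * n ∧ DyckFrom 0 w ∧ HillFreeFrom 0 w} where
  toFun l := ⟨toPath 0 l.1, by rw [length_toPath _ _ l.2.2.1, l.2.1]; rfl,
    dyckFrom_toPath _ _ l.2.2.1, (hillFreeFrom_toPath _ _ l.2.2.1).2 l.2.2.2⟩
  invFun w := ⟨heights 0 w.1, by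
      have := length_toPath _ _ (srFrom_heights 0 w.1)
      rw [toPath_heights _ _ w.2.2.1, w.2.1] at this
      omega,
    srFrom_heights _ _, by
      rw [← hillFreeFrom_toPath _ _ (srFrom_heights 0 w.1), toPath_heights _ _ w.2.2.1]
      exact w.2.2.2⟩
  left_inv l := Subtype.ext (heights_toPath _ _ l.2.2.1)
  right_inv w := Subtype.ext (toPath_heights _ _ w.2.2.1)

/-! ### From functions on `Fin` to lists -/

lemma card_ofFn {α : Type*} (n : ℕ) (P : List α → Prop) :
    Nat.card {f : Fin n → α // P (List.ofFn f)} =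
      Nat.card {l : List α // l.length = n ∧ P l} := by
  refine Nat.card_eq_of_bijective
    (fun f => ⟨List.ofFn f.1, List.length_ofFn, f.2⟩) ⟨fun f g hfg => ?_, ?_⟩
  · exact Subtype.ext (List.ofFn_injective (congrArg Subtype.val hfg))
  · rintro ⟨l, rfl, hl⟩
    exact ⟨⟨l.get, by simpa using hl⟩, Subtype.ext (by simp)⟩

lemma srFrom_ofFn (n h : ℕ) (r : Fin n → ℕ) :
    SRFrom h (List.ofFn r) ↔ (∀ h0 : 0 < n, r ⟨0, h0⟩ ≤ h) ∧
      ∀ (i : Fin n) (hi : i.1 + 1 < n), r ⟨i.1 + 1, hi⟩ ≤ r i + 1 := by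
  induction n generalizing h with
  | zero => simp [SRFrom]
  | succ n ih =>
    rw [List.ofFn_succ, SRFrom, ih, Fin.forall_fin_succ]
    simp [Fin.succ]

lemma noIsolated_ofFn (n : ℕ) (r : Fin n → ℕ) :
    NoIsolated (List.ofFn r) ↔ ∀ i, ¬ IsIsolated r i := by
  induction n with
  | zero => simp [NoIsolated]
  | succ n ih =>
    rw [List.ofFn_succ, NoIsolated, ih, Fin.forall_fin_succ]
    refine and_congr (not_congr (and_congr_right fun _ => ?_)) (forall_congr' fun i => ?_)
    · cases n with
      | zero => exact ⟨fun _ h => absurd h (by simp), fun _ => by simp⟩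
      | succ n => simp [List.ofFn_succ]
    · simp [IsIsolated, Fin.succ]

lemma upsBefore_zero {m : ℕ} (p : Fin m → Bool) : upsBefore p 0 = 0 := by
  simp [upsBefore]

lemma downsBefore_zero {m : ℕ} (p : Fin m → Bool) : downsBefore p 0 = 0 := by
  simp [downsBefore]

lemma upsBefore_succ {m : ℕ} (p : Fin (m + 1) → Bool) (j : ℕ) :
    upsBefore p (j + 1) = (if p 0 = true then 1 else 0) + upsBefore (fun i => p i.succ) j := by
  simp only [upsBefore, Nat.card_eq_fintype_card, Fintype.card_subtype, Finset.card_filter]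
  rw [Fin.sum_univ_succ]
  simp

lemma downsBefore_succ {m : ℕ} (p : Fin (m + 1) → Bool) (j : ℕ) :
    downsBefore p (j + 1) = (if p 0 = false then 1 else 0) + downsBefore (fun i => p i.succ) j := by
  simp only [downsBefore, Nat.card_eq_fintype_card, Fintype.card_subtype, Finset.card_filter]
  rw [Fin.sum_univ_succ]
  simp

lemma dyckFrom_ofFn (m h : ℕ) (p : Fin m → Bool) :
    DyckFrom h (List.ofFn p) ↔ (∀ j ≤ m, downsBefore p j ≤ h + upsBefore p j) ∧
      h + upsBefore p m = downsBefore p m := by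
  induction m generalizing h with
  | zero => simp [DyckFrom, upsBefore_zero, downsBefore_zero]
  | succ m ih =>
    have key : (∀ j ≤ m + 1, downsBefore p j ≤ h + upsBefore p j) ↔
        ∀ j ≤ m, downsBefore p (j + 1) ≤ h + upsBefore p (j + 1) := by
      refine ⟨fun H j hj => H _ (by omega), fun H j hj => ?_⟩
      cases j with
      | zero => simp [downsBefore_zero]
      | succ j => exact H j (by omega)
    rw [key, List.ofFn_succ]
    simp only [upsBefore_succ, downsBefore_succ]
    cases hp : p 0
    · simp only [DyckFrom, ih]
      constructor
      · rintro ⟨h0, H, e⟩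
        refine ⟨fun j hj => ?_, ?_⟩
        · have := H j hj
          simp; omega
        · simp; omega
      · rintro ⟨H, e⟩
        have h0 := H 0 (by omega)
        simp [upsBefore_zero, downsBefore_zero] at h0 e
        refine ⟨by omega, fun j hj => ?_, by omega⟩
        have := H j hj
        simp at this; omega
    · simp only [DyckFrom, ih]
      simp [add_assoc]

lemma hillFreeFrom_ofFn (m h : ℕ) (p : Fin m → Bool) (hp : DyckFrom h (List.ofFn p)) :
    HillFreeFrom h (List.ofFn p) ↔ ∀ (i : Fin m) (hi : i.1 + 1 < m),
      ¬ (h + upsBefore p i.1 = downsBefore p i.1 ∧ p i = true ∧ p ⟨i.1 + 1, hi⟩ = false) := by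
  induction m generalizing h with
  | zero => simp [HillFreeFrom]
  | succ m ih =>
    rw [List.ofFn_succ] at hp ⊢
    rw [Fin.forall_fin_succ]
    simp only [Fin.val_succ, upsBefore_succ, downsBefore_succ, Fin.val_zero, upsBefore_zero,
      downsBefore_zero]
    cases h0 : p 0
    · rw [h0] at hp
      obtain ⟨hpos, hp⟩ := hp
      rw [HillFreeFrom, ih _ _ hp]
      simp only [Bool.false_eq_true, false_and, and_false, not_false_eq_true, implies_true,
        true_and, if_true, if_false, Nat.zero_add, Nat.add_lt_add_iff_right]
      refine forall_congr' fun i => forall_congr' fun hi => not_congr (and_congr ?_ Iff.rfl)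
      omega
    · rw [h0] at hp
      rw [HillFreeFrom, ih _ _ hp]
      refine and_congr ?_ ?_
      · cases m with
        | zero => exact ⟨fun _ hi => absurd hi (by simp), fun _ => by simp⟩
        | succ m => simp [List.ofFn_succ]
      · simp only [Nat.add_lt_add_iff_right]
        refine forall_congr' fun i => forall_congr' fun hi => not_congr (and_congr ?_ Iff.rfl)
        simp [add_assoc]

/-- `|SR_n(0)| = |Dyck^{hf}(2n)|`. -/
theorem SR_nonsingular_eq_hillfree_dyck (n : ℕ) (hn : 1 ≤ n) :
    Nat.card {r : Fin n → ℕ // IsSR r ∧ ∀ i, ¬ IsIsolated r i} =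
      Nat.card {p : Fin (2 * n) → Bool // IsDyck p ∧ HillFree p} := by
  have hl : ∀ r : Fin n → ℕ, (IsSR r ∧ ∀ i, ¬ IsIsolated r i) ↔
      SRFrom 0 (List.ofFn r) ∧ NoIsolated (List.ofFn r) := fun r => by
    simp [srFrom_ofFn, noIsolated_ofFn, IsSR]
  have hr : ∀ p : Fin (2 * n) → Bool, (IsDyck p ∧ HillFree p) ↔
      DyckFrom 0 (List.ofFn p) ∧ HillFreeFrom 0 (List.ofFn p) := fun p => by
    have e : IsDyck p ↔ DyckFrom 0 (List.ofFn p) := by simp [dyckFrom_ofFn, IsDyck]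
    rw [e]
    refine and_congr_right fun hp => ?_
    simp [hillFreeFrom_ofFn _ _ _ hp, HillFree]
  rw [Nat.card_congr (Equiv.subtypeEquivRight hl), Nat.card_congr (Equiv.subtypeEquivRight hr),
    card_ofFn n (fun l => SRFrom 0 l ∧ NoIsolated l),
    card_ofFn (2 * n) (fun w => DyckFrom 0 w ∧ HillFreeFrom 0 w)]
  exact Nat.card_congr (listEquiv n)
end

section
/- The polynomials A_n(x) satisfy, for all n ≥ 1, the recurrence A_n(x) = (x−1)·A_{n−1}(x) + Σ_{i=1}^{n} C_{i−1}·A_{n−i}(x), where A_0(x) = 1. -/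
/-!
A `321`-avoiding permutation `π` with `π b = b` maps the positions before `b` to themselves
(`cut_of_fixed`), so every fixed point is a direct summand of size one. Splitting off the first
indecomposable summand gives `A_n = ∑_{i=1}^n J_i A_{n-i}` (`APoly_eq_sum_JPoly`), where
`J_1 = x` and, for `i ≥ 2`, `J_i` is the number of indecomposable
`321`-avoiding permutations of size `i` (`JPoly_one`, `JPoly_const`).

These constants come from `x = 1`. The number of `321`-avoiding permutations of size `n` is `C_n`
(`card_av`): deleting the first value `j` of such a permutation leaves one in which the values
below `j` appear in increasing order, and refining the count by this condition yields the ballot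
numbers (`bal_choose`). Comparing `C_n = ∑ J_i(1) C_{n-i}` with Segner's recurrence
`C_n = ∑ C_{i-1} C_{n-i}` gives `J_i(1) = C_{i-1}` (`JPoly_eval_one`). The recurrence follows, the
term `(x - 1) A_{n-1}` correcting `C_0 = 1` to `J_1 = x`.
-/

open Finset Polynomial

open Classical in
/-- `APoly n` = weight enumerator of `321`-avoiding permutations of `{1,…,n}` by number
of fixed points. -/
noncomputable def APoly (n : ℕ) : Polynomial ℤ :=
  ∑ π : Equiv.Perm (Fin n),
    if AvoidsPat π ![2, 1, 0] then (Polynomial.X : Polynomial ℤ) ^ fpCount π else 0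

/-! ### Reformulation of the definitions -/

/-- Elementary form of `321`-avoidance: no three positions carry decreasing values. -/
def Av {n : ℕ} (π : Equiv.Perm (Fin n)) : Prop :=
  ∀ a b c, a < b → b < c → π b < π a → ¬ π c < π b

lemma avoidsPat_iff {n : ℕ} (π : Equiv.Perm (Fin n)) :
    AvoidsPat π ![2, 1, 0] ↔ Av π := by
  unfold AvoidsPat ContainsPat Av
  constructor
  · intro h a b c hab hbc h1 h2
    apply h
    refine ⟨![a, b, c], ?_, ?_⟩
    · intro i j hij
      fin_cases i <;> fin_cases j <;> simp_all
      exact hab.trans hbc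
    · intro i j
      fin_cases i <;> fin_cases j <;> simp <;> order
  · rintro h ⟨f, hf, hf2⟩
    refine h (f 0) (f 1) (f 2) (hf (by decide)) (hf (by decide)) ?_ ?_
    · rw [hf2]; decide
    · rw [hf2]; decide

open Classical in
lemma APoly_eq (n : ℕ) :
    APoly n = ∑ π : Equiv.Perm (Fin n) with Av π, (X : ℤ[X]) ^ fpCount π := by
  rw [APoly, Finset.sum_filter]
  simp only [avoidsPat_iff]

open Classical in
lemma fpCount_eq {n : ℕ} (π : Equiv.Perm (Fin n)) :
    fpCount π = ∑ a, if π a = a then 1 else 0 := by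
  simp [fpCount, Fintype.card_subtype]

/-! ### Counting `321`-avoiding permutations -/

/-- The permutation `j, σ'(0), σ'(1), …` where `σ'` is `σ` with the values `≥ j` raised by one. -/
def ins {n : ℕ} (j : Fin (n + 1)) (σ : Equiv.Perm (Fin n)) : Equiv.Perm (Fin (n + 1)) :=
  (Equiv.Perm.decomposeFin.symm (0, σ)).trans j.cycleRange.symm

@[simp] lemma ins_zero {n : ℕ} (j : Fin (n + 1)) (σ : Equiv.Perm (Fin n)) : ins j σ 0 = j := by
  simp [ins]

@[simp] lemma ins_succ {n : ℕ} (j : Fin (n + 1)) (σ : Equiv.Perm (Fin n)) (a : Fin n) :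
    ins j σ a.succ = j.succAbove (σ a) := by
  simp [ins]

lemma ins_bijective (n : ℕ) :
    Function.Bijective (fun p : Fin (n + 1) × Equiv.Perm (Fin n) => ins p.1 p.2) := by
  rw [Fintype.bijective_iff_injective_and_card]
  constructor
  · rintro ⟨j, σ⟩ ⟨k, τ⟩ h
    have h0 : j = k := by simpa using DFunLike.congr_fun h 0
    subst h0
    refine Prod.ext rfl (Equiv.ext fun a => ?_)
    simpa using DFunLike.congr_fun h a.succ
  · simp [Fintype.card_perm, Nat.factorial_succ]

/-- The values `< k` occur in increasing order. -/
def Inc {n : ℕ} (k : ℕ) (π : Equiv.Perm (Fin n)) : Prop :=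
  ∀ a b, a < b → (π a).val < k → π a < π b

/-- A `321` pattern using the new first value `j` is a descent among the values below `j`. -/
lemma av_ins {n : ℕ} (j : Fin (n + 1)) (σ : Equiv.Perm (Fin n)) :
    Av (ins j σ) ↔ Av σ ∧ Inc j σ := by
  constructor
  · intro h
    constructor
    · intro a b c hab hbc h1 h2
      exact h a.succ b.succ c.succ (by simpa) (by simpa) (by simpa) (by simpa)
    · intro a b hab h1
      by_contra h2
      have h3 : σ b < σ a := lt_of_le_of_ne (not_lt.1 h2) (fun e => hab.ne' (σ.injective e))
      refine h 0 a.succ b.succ (by simp) (by simpa) ?_ (by simpa)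
      rw [ins_zero, ins_succ, Fin.succAbove_lt_iff_castSucc_lt]
      exact h1
  · rintro ⟨h, hi⟩ a b c hab hbc
    obtain ⟨b, rfl⟩ := Fin.exists_succ_eq.2 (Fin.ne_zero_of_lt hab)
    obtain ⟨c, rfl⟩ := Fin.exists_succ_eq.2 (Fin.ne_zero_of_lt hbc)
    cases a using Fin.cases with
    | zero =>
      intro h1 h2
      rw [Fin.succ_lt_succ_iff] at hbc
      simp only [ins_zero, ins_succ, Fin.succAbove_lt_iff_castSucc_lt] at h1
      simp only [ins_succ, Fin.succAbove_lt_succAbove_iff] at h2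
      exact lt_asymm h2 (hi b c hbc (by simpa [Fin.lt_def] using h1))
    | succ a =>
      simp only [ins_succ, Fin.succAbove_lt_succAbove_iff, Fin.succ_lt_succ_iff] at *
      exact h a b c hab hbc

lemma inc_ins_zero {n : ℕ} (k : ℕ) (σ : Equiv.Perm (Fin n)) :
    Inc k (ins 0 σ) ↔ Inc (k - 1) σ := by
  constructor
  · intro h a b hab h1
    simpa using h a.succ b.succ (by simpa) (by simp; omega)
  · intro h a b hab h1
    obtain ⟨b, rfl⟩ := Fin.exists_succ_eq.2 (Fin.ne_zero_of_lt hab)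
    cases a using Fin.cases with
    | zero => simp
    | succ a =>
      simp at *
      exact h a b hab (by omega)

lemma not_inc_ins {n : ℕ} (k : ℕ) (j : Fin (n + 1)) (hj : j ≠ 0) (hk : j.val < k)
    (σ : Equiv.Perm (Fin n)) : ¬ Inc k (ins j σ) := by
  intro h
  -- the value `0` is taken at a later position than the value `j > 0`
  have h0 : (ins j σ).symm 0 ≠ 0 := by
    intro e
    rw [Equiv.symm_apply_eq, ins_zero] at e
    exact hj e.symm
  have := h 0 ((ins j σ).symm 0) (Fin.pos_of_ne_zero h0) (by simpa)
  simp at this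

lemma inc_ins_of_le {n : ℕ} (k : ℕ) (j : Fin (n + 1)) (hk : k ≤ j.val)
    (σ : Equiv.Perm (Fin n)) (h : Inc j σ) : Inc k (ins j σ) := by
  intro a b hab h1
  obtain ⟨b, rfl⟩ := Fin.exists_succ_eq.2 (Fin.ne_zero_of_lt hab)
  cases a using Fin.cases with
  | zero => simp at h1; omega
  | succ a =>
    simp only [ins_succ, Fin.succAbove_lt_succAbove_iff, Fin.succ_lt_succ_iff] at *
    refine h a b hab ?_
    have h2 : j.succAbove (σ a) < j := by rw [Fin.lt_def]; omega
    rw [Fin.succAbove_lt_iff_castSucc_lt] at h2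
    exact h2

open Classical in
/-- The number of `321`-avoiding permutations of size `n` whose values `< k` appear in
increasing order. -/
noncomputable def bal (n k : ℕ) : ℕ := #{π : Equiv.Perm (Fin n) | Av π ∧ Inc k π}

/-- Classification by the first value: it is `0`, or some `j + 1 ≥ k`. The truncated `k - 1` is
harmless at `k = 0`, where the condition `Inc` is empty. -/
lemma bal_succ (n k : ℕ) :
    bal (n + 1) k = bal n (k - 1) + ∑ j ∈ range n, if k ≤ j + 1 then bal n (j + 1) else 0 := by
  classical
  have h : bal (n + 1) k = ∑ j : Fin (n + 1), ∑ σ : Equiv.Perm (Fin n),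
      if Av (ins j σ) ∧ Inc k (ins j σ) then 1 else 0 := by
    rw [← Fintype.sum_prod_type', bal, Finset.card_filter]
    exact ((ins_bijective n).sum_comp (fun π => if Av π ∧ Inc k π then 1 else 0)).symm
  rw [h, Fin.sum_univ_succ, ← Fin.sum_univ_eq_sum_range
    (fun j => if k ≤ j + 1 then bal n (j + 1) else 0)]
  congr 1
  · rw [bal, Finset.card_filter]
    refine Finset.sum_congr rfl fun σ _ => if_congr ?_ rfl rfl
    rw [av_ins, inc_ins_zero]
    constructor
    · tauto
    · rintro ⟨h1, h2⟩
      exact ⟨⟨h1, fun a b _ h => absurd h (by simp)⟩, h2⟩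
  · refine Finset.sum_congr rfl fun j _ => ?_
    split_ifs with hk
    · rw [bal, Finset.card_filter]
      refine Finset.sum_congr rfl fun σ _ => if_congr ?_ rfl rfl
      rw [av_ins]
      have : Inc (j.succ : Fin (n + 1)) σ → Inc k (ins j.succ σ) :=
        inc_ins_of_le k j.succ (by simpa) σ
      simp only [Fin.val_succ] at *
      tauto
    · refine Finset.sum_eq_zero fun σ _ => if_neg fun h => ?_
      exact not_inc_ins k j.succ (by simp) (by simp; omega) σ h.2

lemma bal_succ_zero (n : ℕ) : bal (n + 1) 0 = bal (n + 1) 1 := by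
  simp [bal_succ]

lemma bal_succ_self (n : ℕ) : bal (n + 1) (n + 1) = bal n n := by
  rw [bal_succ, Finset.sum_eq_zero, Nat.add_sub_cancel, add_zero]
  intro j hj
  rw [Finset.mem_range] at hj
  rw [if_neg (by omega)]

lemma bal_succ_succ (n k : ℕ) (hk : k < n) :
    bal (n + 1) (k + 1) = bal (n + 1) (k + 2) + bal n k := by
  have h : ∑ j ∈ range n, (if k + 1 ≤ j + 1 then bal n (j + 1) else 0) =
      bal n (k + 1) + ∑ j ∈ range n, if k + 2 ≤ j + 1 then bal n (j + 1) else 0 := by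
    have e : bal n (k + 1) = ∑ j ∈ range n, if j = k then bal n (j + 1) else 0 := by
      rw [Finset.sum_ite_eq' (range n) k, if_pos (by simpa)]
    rw [e, ← Finset.sum_add_distrib]
    refine Finset.sum_congr rfl fun j _ => ?_
    rcases lt_trichotomy j k with h | h | h
    · rw [if_neg (by omega), if_neg (by omega), if_neg (by omega)]
    · rw [if_pos (by omega), if_pos (by omega), if_neg (by omega), add_zero]
    · rw [if_pos (by omega), if_neg (by omega), if_pos (by omega), zero_add]
  rw [bal_succ, bal_succ n (k + 2), h]
  simp only [Nat.add_sub_cancel, show k + 2 - 1 = k + 1 by omega]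
  ring

/-- The ballot number formula `bal n k = binom(2n-k, n) - binom(2n-k, n+1)` for `k ≤ n`, with
`d = n - k` and without subtraction. -/
lemma bal_choose (n : ℕ) : ∀ d k, k + d = n →
    bal n k + (n + d).choose (n + 1) = (n + d).choose n := by
  induction n with
  | zero =>
    intro d k h
    obtain ⟨rfl, rfl⟩ : k = 0 ∧ d = 0 := by omega
    have : bal 0 0 = 1 := by
      classical
      rw [bal, Finset.filter_true_of_mem]
      · simp
      · exact fun π _ => ⟨fun a => a.elim0, fun a => a.elim0⟩
    simp [this]
  | succ n ih =>
    have pos : ∀ d k, k + d = n →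
        bal (n + 1) (k + 1) + (n + 1 + d).choose (n + 2) = (n + 1 + d).choose (n + 1) := by
      intro d
      induction d with
      | zero =>
        intro k hk
        obtain rfl : k = n := by omega
        have := ih 0 k rfl
        simpa [bal_succ_self] using this
      | succ d ihd =>
        intro k hk
        rw [bal_succ_succ n k (by omega)]
        have h1 : bal (n + 1) (k + 2) + (n + 1 + d).choose (n + 2) = (n + 1 + d).choose (n + 1) :=
          ihd (k + 1) (by omega)
        have h2 := ih (d + 1) k hk
        rw [show n + 1 + (d + 1) = (n + 1 + d) + 1 by ring, Nat.choose_succ_succ' _ (n + 1),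
          Nat.choose_succ_succ' _ n, show n + 1 + 1 = n + 2 from rfl]
        rw [show n + (d + 1) = n + 1 + d by ring] at h2
        omega
    intro d k h
    cases k with
    | succ k => exact pos d k (by omega)
    | zero =>
      obtain rfl : d = n + 1 := by omega
      have h1 := pos n 0 (by omega)
      rw [bal_succ_zero, show n + 1 + (n + 1) = (n + 1 + n) + 1 by ring,
        Nat.choose_succ_succ' _ (n + 1), Nat.choose_succ_succ' _ n,
        show n + 1 + 1 = n + 2 from rfl]
      have h2 : (n + 1 + n).choose n = (n + 1 + n).choose (n + 1) :=
        Nat.choose_symm_of_eq_add (by omega)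
      simp only [zero_add] at h1
      omega

open Classical in
/-- There are `C_n` permutations of size `n` avoiding `321`. -/
lemma card_av (n : ℕ) : #{π : Equiv.Perm (Fin n) | Av π} = catalan n := by
  have h0 : #{π : Equiv.Perm (Fin n) | Av π} = bal n 0 := by
    rw [bal]
    congr 1
    ext π
    simp only [Finset.mem_filter, Finset.mem_univ, true_and, iff_self_and]
    exact fun _ a b _ h => absurd h (by simp)
  have h1 := bal_choose n n 0 (by omega)
  have h2 := succ_mul_catalan_eq_centralBinom n
  have h4 := Nat.choose_succ_right_eq (n + n) n
  rw [Nat.centralBinom, two_mul] at h2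
  rw [Nat.add_sub_cancel] at h4
  rw [h0]
  apply Nat.eq_of_mul_eq_mul_left (Nat.succ_pos n)
  rw [h2]
  nlinarith

/-! ### Decomposition into direct sums -/

/-- `π` maps the initial segment `{0, …, k - 1}` into itself. -/
def Cut {n : ℕ} (π : Equiv.Perm (Fin n)) (k : ℕ) : Prop :=
  ∀ a, a.val < k → (π a).val < k

/-- `π` maps no nonempty initial segment shorter than `k` into itself. For `π` of size `k ≥ 1` this
says that `π` is indecomposable; together with `Cut π k`, that its first block has size `k`. -/
def NoCut {n : ℕ} (π : Equiv.Perm (Fin n)) (k : ℕ) : Prop :=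
  ∀ l, 1 ≤ l → l < k → ¬ Cut π l

/-- The direct sum `σ ⊕ τ`. -/
def dsum {i j : ℕ} (σ : Equiv.Perm (Fin i)) (τ : Equiv.Perm (Fin j)) : Equiv.Perm (Fin (i + j)) :=
  finSumFinEquiv.permCongr (Equiv.Perm.sumCongr σ τ)

@[simp] lemma dsum_castAdd {i j : ℕ} (σ : Equiv.Perm (Fin i)) (τ : Equiv.Perm (Fin j))
    (a : Fin i) : dsum σ τ (Fin.castAdd j a) = Fin.castAdd j (σ a) := by
  simp [dsum, Equiv.permCongr_apply]

@[simp] lemma dsum_natAdd {i j : ℕ} (σ : Equiv.Perm (Fin i)) (τ : Equiv.Perm (Fin j))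
    (a : Fin j) : dsum σ τ (Fin.natAdd i a) = Fin.natAdd i (τ a) := by
  simp [dsum, Equiv.permCongr_apply]

lemma dsum_injective {i j : ℕ} {σ σ' : Equiv.Perm (Fin i)} {τ τ' : Equiv.Perm (Fin j)}
    (h : dsum σ τ = dsum σ' τ') : σ = σ' ∧ τ = τ' := by
  constructor
  · ext a
    simpa [Fin.ext_iff] using DFunLike.congr_fun h (Fin.castAdd j a)
  · ext a
    simpa [Fin.ext_iff] using DFunLike.congr_fun h (Fin.natAdd i a)

/-- A permutation with a cut at `i` is a direct sum of permutations of sizes `i` and `j`. -/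
lemma exists_dsum {i j : ℕ} (π : Equiv.Perm (Fin (i + j))) (h : Cut π i) :
    ∃ σ τ, dsum σ τ = π := by
  have h1 : Set.MapsTo (finSumFinEquiv.permCongr.symm π)
      (Set.range (Sum.inl : Fin i → Fin i ⊕ Fin j)) (Set.range Sum.inl) := by
    rintro _ ⟨a, rfl⟩
    refine ⟨⟨(π (Fin.castAdd j a)).val, h _ (by simp)⟩, ?_⟩
    rw [← finSumFinEquiv.injective.eq_iff]
    ext
    simp [Equiv.permCongr_symm, Equiv.permCongr_apply]
  obtain ⟨⟨σ, τ⟩, h2⟩ := Equiv.Perm.mem_sumCongrHom_range_of_perm_mapsTo_inl h1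
  refine ⟨σ, τ, ?_⟩
  exact (finSumFinEquiv.permCongr.eq_symm_apply).1 h2

lemma fpCount_dsum {i j : ℕ} (σ : Equiv.Perm (Fin i)) (τ : Equiv.Perm (Fin j)) :
    fpCount (dsum σ τ) = fpCount σ + fpCount τ := by
  simp only [fpCount_eq, Fin.sum_univ_add, dsum_castAdd, dsum_natAdd, Fin.ext_iff,
    Fin.val_castAdd, Fin.val_natAdd, Nat.add_left_cancel_iff]

lemma cut_dsum {i j : ℕ} (σ : Equiv.Perm (Fin i)) (τ : Equiv.Perm (Fin j)) :
    Cut (dsum σ τ) i := by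
  intro a ha
  have : a = Fin.castAdd j ⟨a, ha⟩ := rfl
  rw [this, dsum_castAdd]
  simp

lemma cut_dsum_iff {i j k : ℕ} (σ : Equiv.Perm (Fin i)) (τ : Equiv.Perm (Fin j)) (hk : k ≤ i) :
    Cut (dsum σ τ) k ↔ Cut σ k := by
  constructor
  · intro h a ha
    simpa using h (Fin.castAdd j a) ha
  · intro h a ha
    have : a = Fin.castAdd j ⟨a, by omega⟩ := rfl
    rw [this, dsum_castAdd]
    exact h _ ha

lemma av_dsum {i j : ℕ} (σ : Equiv.Perm (Fin i)) (τ : Equiv.Perm (Fin j)) :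
    Av (dsum σ τ) ↔ Av σ ∧ Av τ := by
  constructor
  · intro h
    constructor
    · intro a b c
      simpa only [dsum_castAdd, Fin.lt_def, Fin.val_castAdd] using
        h (Fin.castAdd j a) (Fin.castAdd j b) (Fin.castAdd j c)
    · intro a b c
      simpa only [dsum_natAdd, Fin.lt_def, Fin.val_natAdd, Nat.add_lt_add_iff_left] using
        h (Fin.natAdd i a) (Fin.natAdd i b) (Fin.natAdd i c)
  · rintro ⟨hs, ht⟩ a b c
    induction a using Fin.addCases <;> induction b using Fin.addCases <;>
      induction c using Fin.addCases <;>
      simp only [dsum_castAdd, dsum_natAdd, Fin.lt_def, Fin.val_castAdd, Fin.val_natAdd,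
        Nat.add_lt_add_iff_left] <;> first | exact hs _ _ _ | exact ht _ _ _ | (intros; omega)

open Classical in
/-- Weight enumerator of the indecomposable `321`-avoiding permutations of size `n`, by fixed
points. -/
noncomputable def JPoly (n : ℕ) : ℤ[X] :=
  ∑ π : Equiv.Perm (Fin n) with (Av π ∧ NoCut π n), X ^ fpCount π

open Classical in
/-- The `321`-avoiding permutations whose first block has size `i` are the direct sums of an
indecomposable one of size `i` and an arbitrary one of size `j`. -/
lemma block_sum (i j : ℕ) :
    ∑ π : Equiv.Perm (Fin (i + j)) with (Av π ∧ (Cut π i ∧ NoCut π i)), (X : ℤ[X]) ^ fpCount π =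
      JPoly i * APoly j := by
  rw [JPoly, APoly_eq, Finset.sum_mul_sum, ← Finset.sum_product']
  symm
  refine Finset.sum_bij (fun p _ => dsum p.1 p.2) ?_ ?_ ?_ ?_
  · rintro ⟨σ, τ⟩ h
    simp only [Finset.mem_product, Finset.mem_filter, Finset.mem_univ, true_and] at h ⊢
    refine ⟨(av_dsum _ _).2 ⟨h.1.1, h.2⟩, cut_dsum _ _, fun l hl hli hc => ?_⟩
    exact h.1.2 l hl hli ((cut_dsum_iff _ _ hli.le).1 hc)
  · rintro ⟨σ, τ⟩ _ ⟨σ', τ'⟩ _ h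
    obtain ⟨rfl, rfl⟩ := dsum_injective h
    rfl
  · intro π h
    simp only [Finset.mem_filter, Finset.mem_univ, true_and] at h
    obtain ⟨σ, τ, rfl⟩ := exists_dsum π h.2.1
    rw [av_dsum] at h
    refine ⟨(σ, τ), ?_, rfl⟩
    simp only [Finset.mem_product, Finset.mem_filter, Finset.mem_univ, true_and]
    refine ⟨⟨h.1.1, fun l hl hli hc => ?_⟩, h.1.2⟩
    exact h.2.2 l hl hli ((cut_dsum_iff _ _ hli.le).2 hc)
  · rintro ⟨σ, τ⟩ _
    rw [fpCount_dsum, pow_add]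

lemma exists_first_cut {n : ℕ} (hn : 1 ≤ n) (π : Equiv.Perm (Fin n)) :
    ∃ i ∈ Finset.Icc 1 n, Cut π i ∧ NoCut π i := by
  classical
  have h : ∃ i, 1 ≤ i ∧ Cut π i := ⟨n, hn, fun a _ => (π a).isLt⟩
  refine ⟨Nat.find h, ?_, (Nat.find_spec h).2, fun l hl hli hc => Nat.find_min h hli ⟨hl, hc⟩⟩
  rw [Finset.mem_Icc]
  exact ⟨(Nat.find_spec h).1, Nat.find_min' h ⟨hn, fun a _ => (π a).isLt⟩⟩

/-- Classification by the size `i` of the first indecomposable block. -/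
lemma APoly_eq_sum_JPoly (n : ℕ) (hn : 1 ≤ n) :
    APoly n = ∑ i ∈ Finset.Icc 1 n, JPoly i * APoly (n - i) := by
  classical
  have h : ∀ i ∈ Finset.Icc 1 n, JPoly i * APoly (n - i) =
      ∑ π : Equiv.Perm (Fin n) with Av π,
        if Cut π i ∧ NoCut π i then (X : ℤ[X]) ^ fpCount π else 0 := by
    intro i hi
    obtain ⟨j, rfl⟩ := Nat.exists_eq_add_of_le (Finset.mem_Icc.1 hi).2
    rw [Nat.add_sub_cancel_left, ← block_sum, ← Finset.sum_filter, Finset.filter_filter]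
  rw [Finset.sum_congr rfl h, Finset.sum_comm, APoly_eq]
  refine Finset.sum_congr rfl fun π _ => ?_
  obtain ⟨i, hi, hc, hnc⟩ := exists_first_cut hn π
  rw [Finset.sum_eq_single i, if_pos ⟨hc, hnc⟩]
  · intro k hk hki
    refine if_neg fun ⟨hkc, hknc⟩ => ?_
    rw [Finset.mem_Icc] at hi hk
    rcases lt_or_gt_of_ne hki with h | h
    · exact hnc k hk.1 h hkc
    · exact hknc i hi.1 h hc
  · exact fun h => absurd hi h

/-- In a `321`-avoiding permutation a fixed point splits off the positions before it: a larger
value to its left would force a smaller value to its right. -/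
lemma cut_of_fixed {n : ℕ} (π : Equiv.Perm (Fin n)) (h : Av π) (b : Fin n) (hb : π b = b) :
    Cut π b := by
  intro a ha
  by_contra hlt
  have hab : a < b := ha
  have h1 : π b < π a := by
    rw [hb]
    refine lt_of_le_of_ne (not_lt.1 hlt) fun e => ?_
    rw [← hb] at e
    exact hab.ne' (π.injective (by rw [← e, hb]))
  -- `π` maps the `n - b` positions `≥ b` together with `a` into the `n - b` values `≥ b`
  have h2 : ∀ c, b ≤ c → b ≤ π c := by
    intro c hc
    rcases eq_or_lt_of_le hc with rfl | hc
    · exact hb.ge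
    · have := h a b c hab hc h1
      rw [hb] at this
      exact not_lt.1 this
  have h3 : (insert a (Finset.Ici b)).image π ⊆ Finset.Ici b := by
    intro x hx
    simp only [Finset.mem_image, Finset.mem_insert, Finset.mem_Ici] at hx ⊢
    obtain ⟨y, rfl | hy, rfl⟩ := hx
    · exact not_lt.1 hlt
    · exact h2 y hy
  have h4 := Finset.card_le_card h3
  rw [Finset.card_image_of_injective _ π.injective,
    Finset.card_insert_of_notMem (by simpa using hab)] at h4
  omega

lemma JPoly_one : JPoly 1 = X := by
  classical
  rw [JPoly, Finset.filter_true_of_mem]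
  · simp [fpCount]
  · exact fun π _ => ⟨fun a b c hab => absurd hab (by omega), fun l h1 h2 => by omega⟩

/-- Fixed points of an indecomposable permutation of size at least two would split it. -/
lemma JPoly_const (n : ℕ) (hn : 2 ≤ n) : ∃ c : ℤ, JPoly n = C c := by
  classical
  refine ⟨#{π : Equiv.Perm (Fin n) | Av π ∧ NoCut π n}, ?_⟩
  rw [JPoly, Finset.sum_congr rfl (g := fun _ => 1)]
  · simp
  intro π h
  simp only [Finset.mem_filter, Finset.mem_univ, true_and] at h
  have : fpCount π = 0 := by
    rw [fpCount_eq]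
    refine Finset.sum_eq_zero fun b _ => if_neg fun hb => ?_
    rcases Nat.eq_zero_or_pos b.val with h0 | h0
    · refine h.2 1 le_rfl (by omega) fun a ha => ?_
      have : a = b := Fin.ext (by omega)
      rw [this, hb, h0]
      exact one_pos
    · exact h.2 b h0 b.isLt (cut_of_fixed π h.1 b hb)
  rw [this, pow_zero]

lemma APoly_eval_one (n : ℕ) : (APoly n).eval 1 = catalan n := by
  classical
  rw [APoly_eq, ← card_av]
  simp [eval_finsetSum]

lemma catalan_conv (n : ℕ) (hn : 1 ≤ n) :
    catalan n = ∑ i ∈ Finset.Icc 1 n, catalan (i - 1) * catalan (n - i) := by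
  obtain ⟨n, rfl⟩ := Nat.exists_eq_add_of_le' hn
  rw [catalan_succ', Finset.Nat.sum_antidiagonal_eq_sum_range_succ
    (fun i j => catalan i * catalan j), ← Finset.Ico_add_one_right_eq_Icc,
    Finset.sum_Ico_eq_sum_range, Nat.add_sub_cancel]
  refine Finset.sum_congr rfl fun i hi => ?_
  rw [Nat.add_sub_cancel_left, add_comm 1 i, Nat.add_sub_add_right]

/-- The convolution equations `C_n = ∑ J_i(1) C_{n-i}` and `C_n = ∑ C_{i-1} C_{n-i}` determine
their coefficients. -/
lemma JPoly_eval_one (n : ℕ) (hn : 1 ≤ n) : (JPoly n).eval 1 = catalan (n - 1) := by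
  induction n using Nat.strong_induction_on with
  | _ n ih =>
    have h1 := congrArg (eval 1) (APoly_eq_sum_JPoly n hn)
    have h2 : (catalan n : ℤ) = ∑ i ∈ Finset.Icc 1 n, (catalan (i - 1) : ℤ) * catalan (n - i) := by
      exact_mod_cast catalan_conv n hn
    simp only [eval_finsetSum, eval_mul, APoly_eval_one] at h1
    rw [h1, ← Finset.Ico_insert_right hn, Finset.sum_insert (by simp),
      Finset.sum_insert (by simp)] at h2
    have h3 : ∑ i ∈ Finset.Ico 1 n, (JPoly i).eval 1 * (catalan (n - i) : ℤ) =
        ∑ i ∈ Finset.Ico 1 n, (catalan (i - 1) : ℤ) * catalan (n - i) :=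
      Finset.sum_congr rfl fun i hi => by
        rw [ih i (Finset.mem_Ico.1 hi).2 (Finset.mem_Ico.1 hi).1]
    rw [h3] at h2
    simpa using h2

/-! ### The recurrence -/

/-- The recurrence `A_n(x) = (x-1) A_{n-1}(x) + ∑_{i=1}^n C_{i-1} A_{n-i}(x)`. -/
theorem APoly_recurrence (n : ℕ) (hn : 1 ≤ n) :
    APoly n = (Polynomial.X - 1) * APoly (n - 1) +
      ∑ i ∈ Finset.Icc 1 n, (catalan (i - 1) : Polynomial ℤ) * APoly (n - i) := by
  rw [APoly_eq_sum_JPoly n hn, ← Finset.insert_Icc_add_one_left_eq_Icc hn,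
    Finset.sum_insert (by simp), Finset.sum_insert (by simp), JPoly_one]
  have h : ∀ i ∈ Finset.Icc (1 + 1) n, JPoly i * APoly (n - i) =
      (catalan (i - 1) : ℤ[X]) * APoly (n - i) := by
    intro i hi
    rw [Finset.mem_Icc] at hi
    obtain ⟨c, hc⟩ := JPoly_const i hi.1
    have h1 := JPoly_eval_one i (by omega)
    rw [hc, eval_C] at h1
    rw [hc, h1]
    simp
  rw [Finset.sum_congr rfl h, Nat.sub_self, catalan_zero, Nat.cast_one]
  ring
end

section
/- With b(n,k) defined by A_n(x) = Σ_{k=0}^n b(n,k)(x−1)^k, for all n ≥ 1 and all k ≥ 0 one has b(n,k) = b(n,k+1) + b(n−1,k−1), where b(0,0) = 1 and b(n,k) = 0 whenever k > n, n < 0, or k < 0. -/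
/-! Write `y = x - 1`. For `m ≤ n` let `P n m` be the sum of `x ^ f(π)` over the `321`-avoiding
`π ∈ S_n` that increase on the last `m` positions, where `f(π)` counts the fixed points among the
first `n - m` positions (`levelPoly n m` in the code, `0` for `m > n`); thus `P n 0 = A_n`.

Every `σ ∈ S_{n+1}` arises from a unique `π ∈ S_n` by inserting the maximum so that a certain number
`i` of entries follow it, and `σ` avoids `321` exactly when `π` does and increases on its last `i`
positions (`avoids_insMax_iff`). If `i > 0`, no entry from the maximum onwards is a fixed point: the
entries after it increase and the last one lies below its position
(`insMax_ne_of_le`). Sorting the `σ` by `i` gives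
`P (n+1) (m+1) = ∑_{i = m}^{n} P n i` (`levelPoly_succ_succ`), and singling out the `σ` that fix
the last position gives `P (n+1) 0 = P (n+1) 1 + y * P n 0` (`levelPoly_succ_zero`).

From these two rules, induction on `n` shows that `y * P n (m+1)` is `P n m` without its constant
term in `y` (`levelPoly_shift`). For `m = 0` the second rule turns this into
`y * (A_{n+1} - y * A_n) = A_{n+1} - A_{n+1}(1)`, and comparing coefficients of `y ^ (k+1)` is the
recurrence. -/

open Finset Polynomial

/-- `bCoef n k` : the coefficients in the expansion `APoly n = ∑ₖ bCoef n k * (x-1)^k`. -/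
noncomputable def bCoef (n k : ℕ) : ℤ :=
  ((APoly n).comp (Polynomial.X + 1)).coeff k

/-- `bCoef` extended to integer indices, zero for negative arguments. -/
noncomputable def bInt (n k : ℤ) : ℤ :=
  if 0 ≤ n ∧ 0 ≤ k then bCoef n.toNat k.toNat else 0

/-! ### Inserting the maximum -/

/-- The permutation of `n + 1` points obtained from `π` by inserting the new maximum at
position `p`, shifting the entries from `p` on by one place. -/
def insMax {n : ℕ} (p : Fin (n + 1)) (π : Equiv.Perm (Fin n)) : Equiv.Perm (Fin (n + 1)) :=
  (finSuccEquiv' p).trans ((Equiv.optionCongr π).trans (finSuccEquiv' (Fin.last n)).symm)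

lemma insMax_self {n : ℕ} (p : Fin (n + 1)) (π : Equiv.Perm (Fin n)) :
    insMax p π p = Fin.last n := by
  simp [insMax]

lemma insMax_succAbove {n : ℕ} (p : Fin (n + 1)) (π : Equiv.Perm (Fin n)) (j : Fin n) :
    insMax p π (p.succAbove j) = (π j).castSucc := by
  simp [insMax]

lemma insMax_bijective (n : ℕ) :
    Function.Bijective
      (fun x : Fin (n + 1) × Equiv.Perm (Fin n) => insMax x.1 x.2) := by
  rw [Fintype.bijective_iff_injective_and_card]
  refine ⟨?_, ?_⟩
  · rintro ⟨p, π⟩ ⟨p', π'⟩ h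
    simp only at h
    have hp : p = p' := by
      apply (insMax p' π').injective
      rw [insMax_self, ← h, insMax_self]
    subst hp
    have : π = π' := by
      ext j
      have h2 := congrArg (fun σ => σ (p.succAbove j)) h
      simp only [insMax_succAbove] at h2
      exact congrArg Fin.val (Fin.castSucc_injective _ h2)
    rw [this]
  · simp [Fintype.card_perm, Nat.factorial_succ]

/-- Sums over `S_{n+1}` sorted by the number `i` of entries following the maximum. -/
lemma sum_perm_succ {n : ℕ} (g : Equiv.Perm (Fin (n + 1)) → ℤ[X]) :
    ∑ σ, g σ = ∑ i : Fin (n + 1), ∑ π : Equiv.Perm (Fin n), g (insMax i.rev π) := by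
  rw [← (insMax_bijective n).sum_comp g, Fintype.sum_prod_type]
  exact (Equiv.sum_comp Fin.revPerm (fun p => ∑ π : Equiv.Perm (Fin n), g (insMax p π))).symm

/-! ### Avoidance of `321` and increasing tails -/

/-- `π` is increasing on the positions `t, t + 1, …`. -/
def IncFrom {n : ℕ} (t : ℕ) (π : Equiv.Perm (Fin n)) : Prop :=
  ∀ i j : Fin n, t ≤ i.val → i < j → π i < π j

lemma avoids_iff {n : ℕ} (π : Equiv.Perm (Fin n)) :
    AvoidsPat π ![2, 1, 0] ↔ ∀ a b c : Fin n, a < b → b < c → π b < π a → ¬ π c < π b := by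
  unfold AvoidsPat ContainsPat
  constructor
  · intro h a b c hab hbc h1 h2
    refine h ⟨![a, b, c], ?_, ?_⟩
    · intro i j hij
      fin_cases i <;> fin_cases j <;> simp_all [hab.trans hbc]
    · intro i j
      have h3 := h2.trans h1
      fin_cases i <;> fin_cases j <;> simp [h1, h2, h3, h1.le, h2.le, h3.le]
  · rintro h ⟨f, hf, hp⟩
    refine h (f 0) (f 1) (f 2) (hf (by decide)) (hf (by decide)) ?_ ?_
    · exact (hp 1 0).2 (by decide)
    · exact (hp 2 1).2 (by decide)

/-- The maximum can only play the role of `3`, so the entries after it must contain no descent. -/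
lemma avoids_insMax_iff {n : ℕ} (p : Fin (n + 1)) (π : Equiv.Perm (Fin n)) :
    AvoidsPat (insMax p π) ![2, 1, 0] ↔ AvoidsPat π ![2, 1, 0] ∧ IncFrom p.val π := by
  rw [avoids_iff, avoids_iff]
  constructor
  · intro h
    refine ⟨?_, ?_⟩
    · intro a b c hab hbc h1 h2
      refine h (p.succAbove a) (p.succAbove b) (p.succAbove c)
        (by simpa using hab) (by simpa using hbc) ?_ ?_ <;>
      simpa only [insMax_succAbove, Fin.castSucc_lt_castSucc_iff]
    · intro i j hi hij
      by_contra hlt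
      have hne : π i ≠ π j := fun e => hij.ne (π.injective e)
      refine h p (p.succAbove i) (p.succAbove j) ?_ (by simpa using hij) ?_ ?_
      · rw [Fin.succAbove_of_le_castSucc _ _ (by simpa [Fin.le_def] using hi)]
        simp [Fin.lt_def]; omega
      · rw [insMax_self, insMax_succAbove]; exact Fin.castSucc_lt_last _
      · rw [insMax_succAbove, insMax_succAbove, Fin.castSucc_lt_castSucc_iff]
        exact lt_of_le_of_ne (not_lt.1 hlt) hne.symm
  · rintro ⟨hav, hinc⟩ a b c hab hbc h1 h2
    rcases Fin.eq_self_or_eq_succAbove p b with rfl | ⟨b, rfl⟩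
    · rw [insMax_self] at h1
      exact absurd (Fin.le_last _) (not_le.2 h1)
    rcases Fin.eq_self_or_eq_succAbove p c with rfl | ⟨c, rfl⟩
    · rw [insMax_self] at h2
      exact absurd (Fin.le_last _) (not_le.2 h2)
    have hbc' : b < c := by simpa using hbc
    simp only [insMax_succAbove, Fin.castSucc_lt_castSucc_iff] at h1 h2
    rcases Fin.eq_self_or_eq_succAbove p a with rfl | ⟨a, rfl⟩
    · have hb : a.val ≤ b.val := by
        by_contra hcon
        rw [Fin.succAbove_of_castSucc_lt _ _ (by simp [Fin.lt_def]; omega)] at hab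
        simp [Fin.lt_def] at hab; omega
      exact absurd (hinc b c hb hbc') (not_lt.2 h2.le)
    · simp only [insMax_succAbove, Fin.castSucc_lt_castSucc_iff] at h1
      exact hav a b c (by simpa using hab) hbc' h1 h2

/-- An increasing tail reaching the last position lies weakly below the diagonal. -/
lemma IncFrom.apply_le {n t : ℕ} {π : Equiv.Perm (Fin n)} (h : IncFrom t π)
    (j : Fin n) (hj : t ≤ j.val) : (π j).val ≤ j.val := by
  have key : ∀ d, ∀ j : Fin n, t ≤ j.val → j.val + d + 1 = n → (π j).val + d + 1 ≤ n := by
    intro d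
    induction d with
    | zero => intro j _ _; have := (π j).isLt; omega
    | succ d ih =>
      intro j hj hd
      have h1 := ih ⟨j.val + 1, by omega⟩ (by simp; omega) (by simp; omega)
      have h2 := h j ⟨j.val + 1, by omega⟩ hj (by simp [Fin.lt_def])
      rw [Fin.lt_def] at h2
      omega
  have := key (n - 1 - j.val) j hj (by omega)
  omega

/-- From an inserted maximum with an increasing tail after it onwards, nothing is a fixed point. -/
lemma insMax_ne_of_le {n : ℕ} (p : Fin (n + 1)) (hp : p.val < n) (π : Equiv.Perm (Fin n))
    (h : IncFrom p.val π) (q : Fin (n + 1)) (hq : p ≤ q) : insMax p π q ≠ q := by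
  rcases Fin.eq_self_or_eq_succAbove p q with rfl | ⟨j, rfl⟩
  · rw [insMax_self]
    intro e
    rw [← e] at hp
    simp at hp
  · have hj : p.val ≤ j.val := by
      by_contra hcon
      rw [Fin.succAbove_of_castSucc_lt _ _ (by simp [Fin.lt_def]; omega)] at hq
      simp [Fin.le_def] at hq; omega
    have h1 := h.apply_le j hj
    rw [insMax_succAbove, Fin.succAbove_of_le_castSucc _ _ (by simpa [Fin.le_def] using hj)]
    intro e
    have := congrArg Fin.val e
    simp at this
    omega

/-- If the maximum is inserted before a nonempty increasing tail of `π`, then that tail is the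
longest increasing suffix of the resulting permutation. -/
lemma incFrom_insMax_of_lt {n : ℕ} (p : Fin (n + 1)) (hp : p.val < n)
    (π : Equiv.Perm (Fin n)) (h : IncFrom p.val π) (t : ℕ) :
    IncFrom t (insMax p π) ↔ p.val < t := by
  constructor
  · intro hinc
    by_contra hcon
    have h1 := hinc p (Fin.last n) (by omega) (by simpa [Fin.lt_def] using hp)
    rw [insMax_self] at h1
    exact absurd (Fin.le_last _) (not_le.2 h1)
  · intro ht a b ha hab
    rcases Fin.eq_self_or_eq_succAbove p a with rfl | ⟨a, rfl⟩
    · omega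
    rcases Fin.eq_self_or_eq_succAbove p b with rfl | ⟨b, rfl⟩
    · rw [Fin.lt_def] at hab; omega
    rw [insMax_succAbove, insMax_succAbove, Fin.castSucc_lt_castSucc_iff]
    refine h a b ?_ (by simpa using hab)
    by_contra hcon
    rw [Fin.succAbove_of_castSucc_lt _ _ (by simp [Fin.lt_def]; omega)] at ha
    simp at ha; omega

lemma insMax_last_castSucc {n : ℕ} (π : Equiv.Perm (Fin n)) (j : Fin n) :
    insMax (Fin.last n) π j.castSucc = (π j).castSucc := by
  rw [← insMax_succAbove, Fin.succAbove_last]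

lemma incFrom_insMax_last {n : ℕ} (π : Equiv.Perm (Fin n)) (t : ℕ) :
    IncFrom t (insMax (Fin.last n) π) ↔ IncFrom t π := by
  constructor
  · intro h i j hi hij
    have := h i.castSucc j.castSucc hi (by simpa using hij)
    simpa [insMax_last_castSucc] using this
  · intro h a b ha hab
    induction a using Fin.lastCases with
    | last => exact absurd (Fin.le_last _) (not_le.2 hab)
    | cast a =>
      induction b using Fin.lastCases with
      | last => rw [insMax_self, insMax_last_castSucc]; exact Fin.castSucc_lt_last _
      | cast b =>
        rw [insMax_last_castSucc, insMax_last_castSucc, Fin.castSucc_lt_castSucc_iff]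
        exact h a b ha (by simpa using hab)

/-! ### Fixed points in an initial segment -/

/-- Number of fixed points of `π` among the first `t` positions. -/
def fixBelow {n : ℕ} (π : Equiv.Perm (Fin n)) (t : ℕ) : ℕ :=
  (univ.filter (fun i : Fin n => π i = i ∧ i.val < t)).card

lemma fixBelow_eq_fpCount {n : ℕ} (π : Equiv.Perm (Fin n)) : fixBelow π n = fpCount π := by
  unfold fixBelow fpCount
  rw [Nat.card_eq_fintype_card, Fintype.card_subtype]
  simp

lemma fixBelow_insMax {n : ℕ} (p : Fin (n + 1)) (π : Equiv.Perm (Fin n)) (t t' : ℕ)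
    (ht : t ≤ p.val) (htt : t ≤ t')
    (hne : ∀ q : Fin (n + 1), t ≤ q.val → q.val < t' → insMax p π q ≠ q) :
    fixBelow (insMax p π) t' = fixBelow π t := by
  unfold fixBelow
  rw [← card_map (s := univ.filter (fun j : Fin n => π j = j ∧ j.val < t)) Fin.castSuccEmb]
  congr 1
  have key : ∀ j : Fin n, j.val < t → insMax p π j.castSucc = (π j).castSucc := by
    intro j hj
    rw [← insMax_succAbove p, Fin.succAbove_of_castSucc_lt _ _ (by simp [Fin.lt_def]; omega)]
  ext q
  simp only [mem_filter, mem_univ, true_and, mem_map, Fin.coe_castSuccEmb]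
  constructor
  · rintro ⟨hq, hqt⟩
    have hlt : q.val < t := by
      by_contra hcon
      exact hne q (by omega) hqt hq
    refine ⟨⟨q.val, by omega⟩, ⟨?_, hlt⟩, rfl⟩
    have := key ⟨q.val, by omega⟩ hlt
    apply Fin.castSucc_injective
    rw [← this]
    exact hq
  · rintro ⟨j, ⟨hj, hjt⟩, rfl⟩
    exact ⟨by rw [key j hjt, hj], by simp; omega⟩

lemma fixBelow_succ {n : ℕ} (σ : Equiv.Perm (Fin (n + 1))) :
    fixBelow σ (n + 1) = fixBelow σ n + if σ (Fin.last n) = Fin.last n then 1 else 0 := by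
  unfold fixBelow
  simp only [card_filter]
  rw [Fin.sum_univ_castSucc, Fin.sum_univ_castSucc]
  simp

/-! ### The refined enumerators -/

/-- The permutations counted at level `m`: they avoid `321` and increase on the last `m`
positions, of which there must be at least `m`. -/
def Level {n : ℕ} (m : ℕ) (π : Equiv.Perm (Fin n)) : Prop :=
  AvoidsPat π ![2, 1, 0] ∧ m ≤ n ∧ IncFrom (n - m) π

open Classical in
/-- The contribution of `π` to `levelPoly n m`. -/
noncomputable def levelTerm {n : ℕ} (m : ℕ) (π : Equiv.Perm (Fin n)) : ℤ[X] :=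
  if Level m π then (X : ℤ[X]) ^ fixBelow π (n - m) else 0

/-- The enumerator of `321`-avoiding permutations that increase on the last `m` positions, by the
number of fixed points among the other positions. -/
noncomputable def levelPoly (n m : ℕ) : ℤ[X] := ∑ π : Equiv.Perm (Fin n), levelTerm m π

lemma incFrom_of_le {n t : ℕ} (π : Equiv.Perm (Fin n)) (ht : n ≤ t + 1) : IncFrom t π := by
  intro i j hi hij
  rw [Fin.lt_def] at hij
  omega

lemma levelPoly_zero (n : ℕ) : levelPoly n 0 = APoly n := by
  unfold levelPoly APoly levelTerm
  refine sum_congr rfl fun π _ => ?_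
  have h : Level 0 π ↔ AvoidsPat π ![2, 1, 0] := by simp [Level, incFrom_of_le]
  rw [Nat.sub_zero, fixBelow_eq_fpCount]
  open Classical in exact if_congr h rfl rfl

lemma levelPoly_of_lt {n m : ℕ} (h : n < m) : levelPoly n m = 0 := by
  unfold levelPoly levelTerm Level
  exact sum_eq_zero fun π _ => if_neg (by omega)

lemma level_iff_avoids_insMax {n : ℕ} (i : Fin (n + 1)) (π : Equiv.Perm (Fin n)) :
    Level i.val π ↔ AvoidsPat (insMax i.rev π) ![2, 1, 0] := by
  rw [avoids_insMax_iff]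
  have h1 : i.rev.val = n - i.val := by simp [Fin.val_rev]
  have h2 : i.val ≤ n := by omega
  simp [Level, h2]

/-- If the inserted maximum is not last, the `i` entries after it are the longest increasing suffix,
and the fixed points of the new permutation are those of `π` outside its last `i` positions. -/
lemma levelTerm_insMax_of_pos {n : ℕ} (m : ℕ) (i : Fin (n + 1)) (hi : 0 < i.val)
    (π : Equiv.Perm (Fin n)) :
    levelTerm (m + 1) (insMax i.rev π) = if m < i.val then levelTerm i.val π else 0 := by
  have h1 : i.rev.val = n - i.val := by simp [Fin.val_rev]
  have h2 : i.val ≤ n := by omega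
  by_cases hL : Level i.val π
  · have hav := (level_iff_avoids_insMax i π).1 hL
    have hinc : IncFrom i.rev.val π := by rw [h1]; exact hL.2.2
    by_cases hm : m < i.val
    · have hL' : Level (m + 1) (insMax i.rev π) := by
        refine ⟨hav, by omega, ?_⟩
        rw [incFrom_insMax_of_lt _ (by omega) π hinc]
        omega
      rw [if_pos hm]
      unfold levelTerm
      rw [if_pos hL', if_pos hL]
      rw [fixBelow_insMax i.rev π (n - i.val) _ (by omega) (by omega)]
      intro q hq _
      exact insMax_ne_of_le _ (by omega) π hinc q (by rw [Fin.le_def]; omega)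
    · rw [if_neg hm]
      unfold levelTerm
      rw [if_neg]
      rintro ⟨_, h3, h4⟩
      rw [incFrom_insMax_of_lt _ (by omega) π hinc] at h4
      omega
  · have hav := fun h => hL ((level_iff_avoids_insMax i π).2 h)
    unfold levelTerm
    rw [if_neg hL, if_neg (fun h => hav h.1), ite_self]

lemma levelTerm_insMax_last {n : ℕ} (m : ℕ) (π : Equiv.Perm (Fin n)) :
    levelTerm (m + 1) (insMax (Fin.last n) π) = levelTerm m π := by
  have hiff : Level (m + 1) (insMax (Fin.last n) π) ↔ Level m π := by
    unfold Level
    rw [avoids_insMax_iff, incFrom_insMax_last, Nat.add_sub_add_right]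
    have := incFrom_of_le π (t := (Fin.last n).val) (by simp)
    simp only [this, and_true, Nat.add_le_add_iff_right]
  unfold levelTerm
  rw [Nat.add_sub_add_right, fixBelow_insMax (Fin.last n) π (n - m) (n - m) (by simp) le_rfl
    (fun q h h' => by omega)]
  open Classical in exact if_congr hiff rfl rfl

lemma levelPoly_succ_succ (n m : ℕ) :
    levelPoly (n + 1) (m + 1) = ∑ i ∈ Ico m (n + 1), levelPoly n i := by
  unfold levelPoly
  rw [sum_perm_succ, Fin.sum_univ_succ]
  have h0 : (0 : Fin (n + 1)).rev = Fin.last n := by simp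
  have hs : ∀ i : Fin n, ∑ π : Equiv.Perm (Fin n), levelTerm (m + 1) (insMax i.succ.rev π)
      = if m < i.val + 1 then levelPoly n (i.val + 1) else 0 := by
    intro i
    rw [sum_congr rfl fun π _ => levelTerm_insMax_of_pos m i.succ (by simp) π]
    by_cases h : m < i.val + 1
    · simp [levelPoly, h]
    · simp [h]
  simp only [h0, levelTerm_insMax_last, hs]
  rw [Fin.sum_univ_eq_sum_range (fun i => if m < i + 1 then levelPoly n (i + 1) else 0) n]
  change levelPoly n m + _ = ∑ i ∈ Ico m (n + 1), levelPoly n i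
  rw [← sum_filter]
  by_cases hm : m ≤ n
  · rw [sum_eq_sum_Ico_succ_bot (by omega), sum_Ico_add' (fun i => levelPoly n i) m n 1 |>.symm]
    congr 1
    refine sum_congr ?_ fun _ _ => rfl
    ext i; simp; omega
  · rw [levelPoly_of_lt (by omega), Ico_eq_empty (by omega), filter_eq_empty_iff.2]
    · simp
    · intro i hi; simp at hi; omega

lemma levelPoly_succ_zero (n : ℕ) :
    levelPoly (n + 1) 0 = levelPoly (n + 1) 1 + (X - 1) * levelPoly n 0 := by
  have hd : ∀ σ : Equiv.Perm (Fin (n + 1)), levelTerm 0 σ - levelTerm 1 σ =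
      if σ (Fin.last n) = Fin.last n then (X - 1) * levelTerm 1 σ else 0 := by
    intro σ
    have h0 : Level 0 σ ↔ AvoidsPat σ ![2, 1, 0] := by simp [Level, incFrom_of_le]
    have h1 : Level 1 σ ↔ AvoidsPat σ ![2, 1, 0] := by simp [Level, incFrom_of_le]
    have h01 := h0.trans h1.symm
    unfold levelTerm
    simp only [Nat.sub_zero, Nat.add_sub_cancel, fixBelow_succ]
    by_cases hL : Level 1 σ
    · rw [if_pos (h01.2 hL), if_pos hL]
      split_ifs <;> ring
    · rw [if_neg (fun h => hL (h01.1 h)), if_neg hL]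
      simp
  rw [← sub_eq_iff_eq_add']
  unfold levelPoly
  rw [← sum_sub_distrib, sum_congr rfl fun σ _ => hd σ, sum_perm_succ, Fin.sum_univ_succ]
  have h0 : (0 : Fin (n + 1)).rev = Fin.last n := by simp
  have hs : ∀ (i : Fin n) (π : Equiv.Perm (Fin n)),
      insMax i.succ.rev π (Fin.last n) ≠ Fin.last n := by
    intro i π e
    have := (insMax i.succ.rev π).injective (e.trans (insMax_self i.succ.rev π).symm)
    have := congrArg Fin.val this
    rw [Fin.val_rev, Fin.val_succ, Fin.val_last] at this
    omega
  simp only [h0, hs, insMax_self, if_true, if_false, sum_const_zero, add_zero]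
  rw [mul_sum]
  exact sum_congr rfl fun π _ => by rw [levelTerm_insMax_last 0 π]

/-- In the variable `y = X - 1`, passing from level `m` to level `m + 1` drops the constant term
and divides by `y`. -/
lemma levelPoly_shift (n : ℕ) : ∀ m,
    (X - 1) * levelPoly n (m + 1) = levelPoly n m - C ((levelPoly n m).eval 1) := by
  induction n with
  | zero =>
    intro m
    rw [levelPoly_of_lt (Nat.succ_pos m)]
    rcases m with _ | m
    · have : levelPoly 0 0 = 1 := by
        have hav : Level 0 (1 : Equiv.Perm (Fin 0)) :=
          ⟨(avoids_iff _).2 fun a => a.elim0, le_rfl, fun a => a.elim0⟩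
        have hd : (default : Equiv.Perm (Fin 0)) = 1 := Subsingleton.elim _ _
        rw [levelPoly, Fintype.sum_unique, hd, levelTerm, if_pos hav]
        simp [fixBelow]
      simp [this]
    · simp [levelPoly_of_lt (Nat.succ_pos m)]
  | succ n ih =>
    -- Shifting the summation index by one, using `levelPoly n (n + 1) = 0` at the upper end.
    have step : ∀ m, (X - 1) * levelPoly (n + 1) (m + 2) =
        levelPoly (n + 1) (m + 1) - C ((levelPoly (n + 1) (m + 1)).eval 1) := by
      intro m
      have hext : ∑ i ∈ Ico (m + 1) (n + 1), levelPoly n i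
          = ∑ i ∈ Ico m (n + 1), levelPoly n (i + 1) := by
        rw [sum_Ico_add' (fun i => levelPoly n i) m (n + 1) 1]
        refine sum_subset (Ico_subset_Ico_right (by omega)) fun i hi hi' => ?_
        simp only [mem_Ico] at hi hi'
        exact levelPoly_of_lt (by omega)
      rw [levelPoly_succ_succ, levelPoly_succ_succ, hext, mul_sum, sum_congr rfl fun i _ => ih i,
        sum_sub_distrib, eval_finsetSum, map_sum]
    intro m
    rcases m with _ | m
    · have h2 := step 0
      have h3 : levelPoly (n + 1) 1 = levelPoly n 0 + levelPoly (n + 1) 2 := by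
        rw [levelPoly_succ_succ, levelPoly_succ_succ, sum_eq_sum_Ico_succ_bot (by omega)]
      have h4 := levelPoly_succ_zero n
      have h5 : (levelPoly (n + 1) 0).eval 1 = (levelPoly (n + 1) 1).eval 1 := by
        rw [h4]; simp
      rw [h5]
      simp only [zero_add] at h2 ⊢
      linear_combination (X - 1) * h3 + h2 - h4
    · exact step m

/-! ### Comparing coefficients -/

/-- The recurrence in generating form, with `A_{n+1}(1)` the constant term in `y = X - 1`. -/
lemma APoly_identity (n : ℕ) :
    (X - 1) * (APoly (n + 1) - (X - 1) * APoly n) =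
      APoly (n + 1) - C ((APoly (n + 1)).eval 1) := by
  have h1 := levelPoly_shift (n + 1) 0
  have h2 := levelPoly_succ_zero n
  rw [levelPoly_zero] at h1 h2
  rw [levelPoly_zero] at h2
  rw [zero_add] at h1
  linear_combination h1 + (X - 1) * h2

lemma bCoef_recurrence (n k : ℕ) :
    bCoef (n + 1) k - (X * (APoly n).comp (X + 1)).coeff k = bCoef (n + 1) (k + 1) := by
  have h := congrArg (fun p => (p.comp (X + 1)).coeff (k + 1)) (APoly_identity n)
  simp only [sub_comp, mul_comp, X_comp, one_comp, C_comp, add_sub_cancel_right, coeff_X_mul,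
    coeff_sub, coeff_C_succ, sub_zero] at h
  exact h

/-- For `n ≥ 1` and `k ≥ 0`: `b(n,k) = b(n,k+1) + b(n-1,k-1)`. -/
theorem bInt_recurrence (n k : ℤ) (hn : 1 ≤ n) (hk : 0 ≤ k) :
    bInt n k = bInt n (k + 1) + bInt (n - 1) (k - 1) := by
  obtain ⟨N, rfl⟩ : ∃ N : ℕ, n = N + 1 := ⟨(n - 1).toNat, by omega⟩
  obtain ⟨K, rfl⟩ := Int.eq_ofNat_of_zero_le hk
  have h := bCoef_recurrence N K
  have e1 : bInt ((N : ℤ) + 1) K = bCoef (N + 1) K := by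
    rw [bInt, if_pos (by omega)]; congr 1
  have e2 : bInt ((N : ℤ) + 1) (K + 1) = bCoef (N + 1) (K + 1) := by
    rw [bInt, if_pos (by omega)]; congr 1
  have e3 : bInt ((N : ℤ) + 1 - 1) (K - 1) = (X * (APoly N).comp (X + 1)).coeff K := by
    rcases K with _ | K
    · rw [bInt, if_neg (by omega)]; simp
    · rw [bInt, if_pos (by omega), coeff_X_mul, bCoef]; simp
  rw [e1, e2, e3]
  linarith
end

section
/- For every n ≥ 1, the n-th Catalan number satisfies C_n = 2F_n + F_{n−1}, where F_n is the n-th Fine number. -/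
/-!
Reading a similarity-relation sequence from left to right, the number of ways to extend it depends
only on its current height. Let `ballot m h` count the extensions by `m` further entries from
height `h`, and let `fineFrom m h` count those extensions for which neither the current entry nor
any later one is isolated. Both satisfy a linear recurrence in `m` (the next height `j` ranges over
`0, …, h + 1`, with the step `0 → 0` forbidden for `fineFrom`), and `Fine (m + 1) = fineFrom m 0`.

Since the recurrence of `fineFrom` is linear, `2 * fineFrom (m + 1) h + fineFrom m h` satisfies it
too, and comparison of initial values identifies it with `ballot (m + 1) h + ballot (m + 1) (h - 1)`
for `h ≥ 1` and with `ballot (m + 1) 0` for `h = 0` (`two_fineFrom_add`). Finally `ballot` is a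
ballot number, `ballot (m + 1) h = (2m+h+3).choose (m+1) - (2m+h+3).choose m`, by Pascal's rule, so
that `ballot m 0 = catalan (m + 1)`.
-/

open Finset Polynomial

/-- Number of sequences `s₁, …, sₘ` of naturals with `s₁ ≤ h + 1` and `sᵢ₊₁ ≤ sᵢ + 1`. -/
def ballot : ℕ → ℕ → ℕ
  | 0, _ => 1
  | m + 1, h => ∑ j ∈ range (h + 2), ballot m j

/-- Number of sequences `h = s₀, s₁, …, sₘ` of naturals with `sᵢ₊₁ ≤ sᵢ + 1`, no two consecutive
zeros, and nonzero last entry. -/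
def fineFrom : ℕ → ℕ → ℕ
  | 0, h => if h = 0 then 0 else 1
  | m + 1, h => ∑ j ∈ range (h + 2) with ¬ (h = 0 ∧ j = 0), fineFrom m j

/-- The sequences counted by `fineFrom m h`. -/
def fineSeqs : (m : ℕ) → ℕ → Finset (Fin (m + 1) → ℕ)
  | 0, h => if h = 0 then ∅ else {fun _ => h}
  | m + 1, h => (range (h + 2)).filter (fun j => ¬ (h = 0 ∧ j = 0)) |>.biUnion
      fun j => (fineSeqs m j).image (Fin.cons h)

lemma mem_fineSeqs (m : ℕ) : ∀ (h : ℕ) (r : Fin (m + 1) → ℕ), r ∈ fineSeqs m h ↔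
    r 0 = h ∧ (∀ i : Fin m, r i.succ ≤ r i.castSucc + 1 ∧ ¬ (r i.castSucc = 0 ∧ r i.succ = 0)) ∧
      r (Fin.last m) ≠ 0 := by
  induction m with
  | zero =>
    intro h r
    have hr : r = (fun _ => h) ↔ r 0 = h :=
      ⟨fun e => by rw [e], fun e => funext fun i => by rw [Fin.fin_one_eq_zero i]; exact e⟩
    by_cases hh : h = 0
    · simp [fineSeqs, hh]
    · simp only [fineSeqs, hh, if_false, Finset.mem_singleton, hr]
      constructor
      · intro e
        exact ⟨e, fun i => i.elim0, by simpa [e] using hh⟩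
      · exact fun e => e.1
  | succ m ih =>
    intro h r
    simp only [fineSeqs, mem_biUnion, mem_filter, mem_range, mem_image, ih]
    constructor
    · rintro ⟨j, ⟨hj, hz⟩, s, ⟨hs0, hs, hl⟩, rfl⟩
      refine ⟨by simp, ?_, by simpa [← Fin.succ_last] using hl⟩
      intro i
      refine Fin.cases ?_ (fun i => ?_) i
      · simp only [Fin.castSucc_zero, Fin.cons_succ, Fin.cons_zero, hs0]
        exact ⟨by omega, hz⟩
      · simpa [← Fin.succ_castSucc] using hs i
    · rintro ⟨h0, hs, hl⟩
      refine ⟨r 1, ?_, Fin.tail r, ⟨rfl, fun i => ?_, ?_⟩, ?_⟩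
      · have := hs 0
        simp only [Fin.castSucc_zero, Fin.succ_zero_eq_one, h0] at this
        exact ⟨by omega, this.2⟩
      · simpa only [Fin.tail, Fin.succ_castSucc] using hs i.succ
      · simpa [Fin.tail] using hl
      · rw [← h0, Fin.cons_self_tail]

lemma card_fineSeqs (m : ℕ) : ∀ h, (fineSeqs m h).card = fineFrom m h := by
  induction m with
  | zero => intro h; by_cases hh : h = 0 <;> simp [fineSeqs, fineFrom, hh]
  | succ m ih =>
    intro h
    rw [fineSeqs, fineFrom, card_biUnion]
    · refine sum_congr rfl fun j _ => ?_
      rw [card_image_of_injective _ (Fin.cons_right_injective (α := fun _ => ℕ) h), ih]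
    · intro j _ k _ hjk
      rw [Function.onFun, Finset.disjoint_left]
      simp only [mem_image, mem_fineSeqs]
      rintro _ ⟨s, hs, rfl⟩ ⟨t, ht, e⟩
      have := Fin.cons_right_injective (α := fun _ => ℕ) h e
      subst this
      exact hjk (hs.1.symm.trans ht.1)

lemma fine_succ (m : ℕ) : Fine (m + 1) = fineFrom m 0 := by
  rw [← card_fineSeqs, Fine]
  refine Nat.subtype_card _ fun r => ?_
  rw [mem_fineSeqs]
  constructor
  · rintro ⟨h0, hs, hl⟩
    refine ⟨⟨fun _ => h0, fun i h => (hs ⟨i, by omega⟩).1⟩, fun i hi => ?_⟩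
    by_cases h : i.1 + 1 < m + 1
    · exact (hs ⟨i, by omega⟩).2 ⟨hi.1, hi.2 h⟩
    · have : i = Fin.last m := Fin.ext (by simp only [Fin.val_last]; omega)
      exact hl (this ▸ hi.1)
  · rintro ⟨⟨h0, hs⟩, hi⟩
    refine ⟨h0 (by omega), fun i => ⟨hs i.castSucc (by simp), fun hz => ?_⟩, fun hz => ?_⟩
    · exact hi i.castSucc ⟨hz.1, fun _ => hz.2⟩
    · exact hi (Fin.last m) ⟨hz, fun h => absurd h (by simp)⟩

lemma fine_zero : Fine 0 = 1 := by
  rw [Fine, Nat.card_eq_one_iff_unique]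
  exact ⟨inferInstance, ⟨⟨fun i => i.elim0, ⟨fun h => absurd h (by simp), fun i => i.elim0⟩,
    fun i => i.elim0⟩⟩⟩

lemma ballot_succ (m h : ℕ) : ballot (m + 1) h = ∑ j ∈ range (h + 2), ballot m j := rfl

lemma ballot_succ_zero (m : ℕ) : ballot (m + 1) 0 = ballot m 0 + ballot m 1 := by
  simp [ballot, sum_range_succ]

lemma ballot_succ_succ (m h : ℕ) :
    ballot (m + 1) (h + 1) = ballot (m + 1) h + ballot m (h + 2) := by
  rw [ballot_succ, sum_range_succ, ← ballot_succ]

lemma fineFrom_succ_zero (m : ℕ) : fineFrom (m + 1) 0 = fineFrom m 1 := by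
  simp [fineFrom, sum_filter, sum_range_succ]

lemma fineFrom_succ_succ (m h : ℕ) :
    fineFrom (m + 1) (h + 1) = ∑ j ∈ range (h + 3), fineFrom m j := by
  simp [fineFrom]

lemma two_fineFrom_add (m : ℕ) : 2 * fineFrom (m + 1) 0 + fineFrom m 0 = ballot (m + 1) 0 ∧
    ∀ h, 2 * fineFrom (m + 1) (h + 1) + fineFrom m (h + 1) =
      ballot (m + 1) (h + 1) + ballot (m + 1) h := by
  induction m with
  | zero =>
    refine ⟨by rw [fineFrom_succ_zero]; simp [fineFrom, ballot], fun h => ?_⟩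
    rw [fineFrom_succ_succ, sum_range_succ']
    simp [fineFrom, ballot]
    omega
  | succ m ih =>
    refine ⟨?_, fun h => ?_⟩
    · rw [fineFrom_succ_zero, fineFrom_succ_zero, ih.2, ballot_succ_zero (m + 1), add_comm]
    · rw [fineFrom_succ_succ, fineFrom_succ_succ, mul_sum, ← sum_add_distrib, sum_range_succ', ih.1,
        sum_congr rfl fun j _ => ih.2 j, sum_add_distrib, ballot_succ (m + 1) (h + 1),
        ballot_succ (m + 1) h, sum_range_succ' _ (h + 2)]
      ring

/-- The ballot number `(2m+h+3).choose (m+1) - (2m+h+3).choose m`, written without subtraction. -/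
lemma ballot_add_choose (m : ℕ) : ∀ h,
    ballot (m + 1) h + (2 * m + h + 3).choose m = (2 * m + h + 3).choose (m + 1) := by
  induction m with
  | zero => intro h; simp [ballot]
  | succ m ih =>
    intro h
    induction h with
    | zero =>
      have h0 := ih 0
      have h1 := ih 1
      have hs : (2 * m + 3).choose (m + 2) = (2 * m + 3).choose (m + 1) :=
        Nat.choose_symm_half (m + 1)
      rw [ballot_succ_zero]
      simp only [show 2 * (m + 1) + 0 + 3 = 2 * m + 3 + 1 + 1 by ring,
        show 2 * m + 1 + 3 = 2 * m + 3 + 1 by ring, Nat.choose_succ_succ', add_zero] at *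
      rcases m with _ | m
      · simp at *; omega
      · simp only [Nat.choose_succ_succ' _ m] at *
        omega
    | succ h ihh =>
      have h2 := ih (h + 2)
      rw [ballot_succ_succ]
      simp only [show 2 * (m + 1) + (h + 1) + 3 = 2 * m + h + 5 + 1 by ring,
        show 2 * (m + 1) + h + 3 = 2 * m + h + 5 by ring,
        show 2 * m + (h + 2) + 3 = 2 * m + h + 5 by ring, Nat.choose_succ_succ' (2 * m + h + 5)] at *
      omega

lemma ballot_zero_right (m : ℕ) : ballot m 0 = catalan (m + 1) := by
  rcases m with _ | m
  · simp [ballot]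
  · apply Nat.eq_of_mul_eq_mul_left (Nat.succ_pos (m + 1 + 1))
    have h := ballot_add_choose m 0
    have hc := Nat.choose_succ_right_eq (2 * m + 3) m
    have hs : (2 * m + 3).choose (m + 2) = (2 * m + 3).choose (m + 1) :=
      Nat.choose_symm_half (m + 1)
    rw [Nat.succ_eq_add_one, succ_mul_catalan_eq_centralBinom, Nat.centralBinom,
      show 2 * (m + 1 + 1) = 2 * m + 3 + 1 by ring, Nat.choose_succ_succ', hs]
    rw [show 2 * m + 3 - m = m + 3 by omega] at hc
    rw [add_zero] at h
    nlinarith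

/-- `C_n = 2 F_n + F_{n-1}` for `n ≥ 1`. -/
theorem catalan_eq_two_fine_add_fine (n : ℕ) (hn : 1 ≤ n) :
    catalan n = 2 * Fine n + Fine (n - 1) := by
  obtain _ | _ | m := n
  · omega
  · simp [fine_succ, fine_zero, fineFrom]
  · simp only [fine_succ, Nat.add_sub_cancel]
    rw [(two_fineFrom_add m).1, ballot_zero_right]
end

section
/- For every h ≥ 1, the number of 132-avoiding permutations of {1,…,h+2} with exactly h fixed points is h+1, i.e., s_{h+2}^h(132) = h+1. -/
/-!
A permutation of `h + 2` points with exactly `h` fixed points moves exactly two points, so it is a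
transposition `(a b)` with `a < b`. If `a` is not the least point `0`, the values at `0 < a < b`
are `0, b, a`, a 132 pattern. Conversely every inversion of `(0 b)` involves position `0` or the
value `0`, so no inversion has a smaller value before it, and `(0 b)` avoids 132. Hence the
permutations counted are the `(0 b)` with `b ≠ 0`, and there are `h + 1` of them.
-/

open Finset Polynomial

theorem fpCount_add_card_support {n : ℕ} (π : Equiv.Perm (Fin n)) :
    fpCount π + π.support.card = n := by
  have h := Finset.card_filter_add_card_filter_not (s := (Finset.univ : Finset (Fin n)))
    (fun i => π i = i)
  rw [Finset.card_univ, Fintype.card_fin] at h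
  rw [fpCount, Nat.card_eq_fintype_card, Fintype.card_subtype]
  exact h

theorem fpCount_eq_iff_isSwap {h : ℕ} (π : Equiv.Perm (Fin (h + 2))) :
    fpCount π = h ↔ π.IsSwap := by
  rw [← Equiv.Perm.card_support_eq_two]
  have := fpCount_add_card_support π
  omega

theorem containsPat_132_iff {n : ℕ} (π : Equiv.Perm (Fin n)) :
    ContainsPat π ![0, 2, 1] ↔
      ∃ i j k : Fin n, i < j ∧ j < k ∧ π i < π k ∧ π k < π j := by
  constructor
  · rintro ⟨f, hf, hp⟩
    exact ⟨f 0, f 1, f 2, hf (by decide), hf (by decide), (hp 0 2).2 (by decide),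
      (hp 2 1).2 (by decide)⟩
  · rintro ⟨i, j, k, hij, hjk, hik, hkj⟩
    refine ⟨![i, j, k], ?_, ?_⟩
    · intro a b hab
      fin_cases a <;> fin_cases b <;> simp at hab ⊢ <;> order
    · intro a b
      fin_cases a <;> fin_cases b <;> simp <;> order

/-- An inversion of `(0 b)` has first position `0` or second value `0`. -/
theorem avoidsPat_swap_zero {n : ℕ} (b : Fin (n + 1)) :
    AvoidsPat (Equiv.swap 0 b) ![0, 2, 1] := by
  rw [AvoidsPat, containsPat_132_iff]
  rintro ⟨i, j, k, hij, hjk, hik, hkj⟩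
  have hj : j ≠ 0 := ne_of_gt (lt_of_le_of_lt (Fin.zero_le i) hij)
  have hk : k ≠ 0 := ne_of_gt (lt_of_le_of_lt (Fin.zero_le j) hjk)
  have hkb : k ≠ b := by
    rintro rfl
    rw [Equiv.swap_apply_right] at hik
    exact absurd hik (Fin.not_lt_zero _)
  rw [Equiv.swap_apply_of_ne_of_ne hk hkb] at hkj
  by_cases hjb : j = b
  · rw [hjb, Equiv.swap_apply_right] at hkj
    exact absurd hkj (Fin.not_lt_zero _)
  · rw [Equiv.swap_apply_of_ne_of_ne hj hjb] at hkj
    exact absurd hkj hjk.asymm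

theorem eq_zero_of_avoidsPat_swap {n : ℕ} {a b : Fin (n + 1)} (hab : a < b)
    (h : AvoidsPat (Equiv.swap a b) ![0, 2, 1]) : a = 0 := by
  by_contra ha
  have ha' : 0 < a := Fin.pos_iff_ne_zero.2 ha
  refine h ((containsPat_132_iff _).2 ⟨0, a, b, ha', hab, ?_, ?_⟩)
  · rwa [Equiv.swap_apply_right,
      Equiv.swap_apply_of_ne_of_ne ha'.ne (ha'.trans hab).ne]
  · rwa [Equiv.swap_apply_right, Equiv.swap_apply_left]

theorem avoidsPat_and_fpCount_iff {h : ℕ} (π : Equiv.Perm (Fin (h + 2))) :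
    (AvoidsPat π ![0, 2, 1] ∧ fpCount π = h) ↔
      ∃ b : Fin (h + 1), Equiv.swap 0 b.succ = π := by
  rw [fpCount_eq_iff_isSwap]
  constructor
  · rintro ⟨hav, a, b, hab, rfl⟩
    wlog hlt : a < b generalizing a b
    · rw [Equiv.swap_comm] at hav ⊢
      exact this b a hab.symm hav (lt_of_le_of_ne (not_lt.1 hlt) hab.symm)
    obtain rfl := eq_zero_of_avoidsPat_swap hlt hav
    obtain ⟨c, rfl⟩ := Fin.exists_succ_eq.2 hab.symm
    exact ⟨c, rfl⟩
  · rintro ⟨b, rfl⟩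
    exact ⟨avoidsPat_swap_zero _, 0, b.succ, (Fin.succ_ne_zero b).symm, rfl⟩

/-- `s_{h+2}^h(132) = h + 1` for `h ≥ 1`. -/
theorem s_h2_h_132 (h : ℕ) (hh : 1 ≤ h) :
    sCount (h + 2) h ![0, 2, 1] = h + 1 := by
  have hinj : Function.Injective
      (fun b : Fin (h + 1) => (Equiv.swap 0 b.succ : Equiv.Perm (Fin (h + 2)))) := by
    intro b c hbc
    have h0 := congrArg (fun π : Equiv.Perm (Fin (h + 2)) => π 0) hbc
    simpa using h0
  rw [sCount, Nat.card_congr (Equiv.subtypeEquivRight avoidsPat_and_fpCount_iff)]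
  exact (Nat.card_range_of_injective hinj).trans (Nat.card_fin _)
end

section
/- For every h ≥ 1, the number of 312-avoiding permutations of {1,…,h+2} with exactly h fixed points is at least 2h+1, i.e., s_{h+2}^h(312) ≥ 2h+1. -/
/-!
A transposition of `{1, …, h + 2}` has exactly `h` fixed points. The transposition `(a b)` with
`a < b ≤ a + 2` avoids 312: its only inversions involve the value `b` at position `a` or the value
`a` at position `b`, and at most one point lies strictly between them, so no entry is followed by
two smaller ones in increasing order. There are `h + 1` such transpositions with `b = a + 1`
and `h` with `b = a + 2`.
-/


open Finset Polynomial

lemma avoids_swap {n : ℕ} (a b : Fin n) (hab : a.val < b.val) (hba : b.val ≤ a.val + 2) :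
    AvoidsPat (Equiv.swap a b) ![2, 0, 1] := by
  rintro ⟨f, hf, h⟩
  have h01 : f 0 < f 1 := hf (by decide)
  have h12 : f 1 < f 2 := hf (by decide)
  have h1 := (h 1 2).2 (by decide)
  have h2 := (h 2 0).2 (by decide)
  simp only [Equiv.swap_apply_def] at h1 h2
  generalize f 0 = x at *
  generalize f 1 = y at *
  generalize f 2 = z at *
  simp only [Fin.lt_def, Fin.ext_iff] at *
  split_ifs at h1 h2 <;> omega

lemma fpCount_swap {h : ℕ} (a b : Fin (h + 2)) (hab : a ≠ b) :
    fpCount (Equiv.swap a b) = h := by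
  have h1 := Equiv.Perm.card_support_swap hab
  have h2 := Finset.card_compl (Equiv.swap a b).support
  rw [h1, Fintype.card_fin] at h2
  rw [fpCount, Nat.card_eq_fintype_card, Fintype.card_subtype]
  have h3 : (Finset.univ.filter fun i => Equiv.swap a b i = i) = (Equiv.swap a b).supportᶜ := by
    ext i
    simp only [Finset.mem_filter, Finset.mem_univ, true_and, Finset.mem_compl,
      Equiv.Perm.mem_support, not_not]
  rw [h3, h2]
  omega

lemma swap_inj_of_lt {n : ℕ} {a b c d : Fin n} (hab : a.val < b.val) (hcd : c.val < d.val)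
    (h : Equiv.swap a b = Equiv.swap c d) : a.val = c.val ∧ b.val = d.val := by
  have h1 := congrArg (fun e => e a) h
  simp only [Equiv.swap_apply_left, Equiv.swap_apply_def] at h1
  have h2 := congrArg (fun e => e b) h
  simp only [Equiv.swap_apply_right, Equiv.swap_apply_def] at h2
  simp only [Fin.ext_iff] at h1 h2
  split_ifs at h1 h2 <;> omega

/-- The endpoints `a < b` of the transpositions being counted: `inl i` stands for `(i, i + 1)`
and `inr i` for `(i, i + 2)`. -/
def ends (h : ℕ) : Fin (h + 1) ⊕ Fin h → Fin (h + 2) × Fin (h + 2)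
  | .inl i => (⟨i, by omega⟩, ⟨i + 1, by omega⟩)
  | .inr i => (⟨i, by omega⟩, ⟨i + 2, by omega⟩)

lemma ends_lt (h : ℕ) (s : Fin (h + 1) ⊕ Fin h) : (ends h s).1.val < (ends h s).2.val := by
  cases s <;> simp [ends]

lemma ends_le (h : ℕ) (s : Fin (h + 1) ⊕ Fin h) : (ends h s).2.val ≤ (ends h s).1.val + 2 := by
  cases s <;> simp [ends]

/-- `s_{h+2}^h(312) ≥ 2h + 1` for `h ≥ 1`. -/
theorem s_h2_h_312_ge (h : ℕ) (hh : 1 ≤ h) :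
    2 * h + 1 ≤ sCount (h + 2) h ![2, 0, 1] := by
  let F : Fin (h + 1) ⊕ Fin h →
      {π : Equiv.Perm (Fin (h + 2)) // AvoidsPat π ![2, 0, 1] ∧ fpCount π = h} := fun s =>
    ⟨Equiv.swap (ends h s).1 (ends h s).2, avoids_swap _ _ (ends_lt h s) (ends_le h s),
      fpCount_swap _ _ (fun e => (ends_lt h s).ne (congrArg Fin.val e))⟩
  have hF : Function.Injective F := by
    intro s t hst
    have := swap_inj_of_lt (ends_lt h s) (ends_lt h t) (congrArg Subtype.val hst)
    rcases s with i | i <;> rcases t with j | j <;>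
      simp only [ends, Sum.inl.injEq, Sum.inr.injEq, Fin.ext_iff] at this ⊢ <;> omega
  have := Nat.card_le_card_of_injective F hF
  rw [Nat.card_eq_fintype_card, Fintype.card_sum, Fintype.card_fin, Fintype.card_fin] at this
  unfold sCount
  omega
end

section
/- If a permutation π of {1,…,n} contains exactly one occurrence of the pattern 321 (i.e., exactly one triple of indices i < j < k with π_i > π_j > π_k), then π has a fixed point; in particular there are no derangements of {1,…,n} containing exactly one 321 pattern. -/
/-! The middle entry `j` of the unique `321` occurrence `(i, j, k)` is a fixed point. Any position
left of `j` with a larger value could replace `i`, and any position right of `j` with a smaller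
value could replace `k`, so uniqueness makes `i` and `k` the only such positions. Hence the set of
positions `x < j` and the set of positions with `π x < π j` agree after deleting `i` from the
former and `k` from the latter, so they have equal size; these sizes are `j` and `π j`. -/

open Finset Polynomial

/-- A permutation of `{1,…,n}` containing exactly one occurrence of the pattern `321`
(one triple `i < j < k` with `π i > π j > π k`) has a fixed point. -/
theorem one_321_pattern_has_fixed_point (n : ℕ) (π : Equiv.Perm (Fin n))
    (h : Nat.card {t : Fin n × Fin n × Fin n //
      t.1 < t.2.1 ∧ t.2.1 < t.2.2 ∧ π t.2.2 < π t.2.1 ∧ π t.2.1 < π t.1} = 1) :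
    ∃ i, π i = i := by
  obtain ⟨hsub, ⟨⟨i, j, k⟩, hij, hjk, hkj, hji⟩⟩ := Nat.card_eq_one_iff_unique.mp h
  simp only at hij hjk hkj hji
  have hL : ∀ x, x < j → π j < π x → x = i := by
    intro x hx hπ
    have := congrArg (fun t => t.1.1) (hsub.elim ⟨(x, j, k), hx, hjk, hkj, hπ⟩
      ⟨(i, j, k), hij, hjk, hkj, hji⟩)
    exact this
  have hR : ∀ x, j < x → π x < π j → x = k := by
    intro x hx hπ
    have := congrArg (fun t => t.1.2.2) (hsub.elim ⟨(i, j, x), hij, hx, hπ, hji⟩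
      ⟨(i, j, k), hij, hjk, hkj, hji⟩)
    exact this
  have hset : (Finset.univ.filter (fun x => x < j)).erase i
      = (Finset.univ.filter (fun x => π x < π j)).erase k := by
    ext x
    simp only [Finset.mem_erase, Finset.mem_filter, Finset.mem_univ, true_and]
    constructor
    · rintro ⟨hxi, hxj⟩
      refine ⟨(hxj.trans hjk).ne, ?_⟩
      refine lt_of_le_of_ne (not_lt.mp fun hlt => hxi (hL x hxj hlt)) ?_
      exact fun he => hxj.ne (π.injective he)
    · rintro ⟨hxk, hxj⟩
      refine ⟨fun he => lt_asymm hji (he ▸ hxj), ?_⟩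
      refine lt_of_le_of_ne (not_lt.mp fun hlt => hxk (hR x hlt hxj)) ?_
      exact fun he => hxj.ne (congrArg π he)
  have hS : (Finset.univ.filter (fun x => x < j)).card = j := by
    rw [Finset.filter_gt_eq_Iio, Fin.card_Iio]
  have hT : (Finset.univ.filter (fun x => π x < π j)).card = π j := by
    rw [← Fin.card_Iio (π j)]
    exact Finset.card_equiv π (by simp)
  have hi : i ∈ Finset.univ.filter (fun x => x < j) := by simpa using hij
  have hk : k ∈ Finset.univ.filter (fun x => π x < π j) := by simpa using hkj
  refine ⟨j, Fin.ext ?_⟩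
  rw [← hT, ← hS, ← Finset.card_erase_add_one hi, ← Finset.card_erase_add_one hk, hset]
end

section
/- For every n ≥ 3, the number of 231-avoiding derangements of {1,…,n} is strictly less than the n-th Fine number, i.e., d_n(231) < F_n. -/
/-!
Send a permutation `π` to its inversion code `r i = #{j < i : π j > π i}`, which determines `π`.
If `π` avoids `231`, every `j < i` with `π j > π (i+1)` also satisfies `π j > π i`, since otherwise
`j, i, i+1` would form a `231`; hence `r (i+1) ≤ r i + 1` and the code is a similarity-relation
sequence (`isSR_code`).

If `i` is isolated in the code, then `π i` is a left-to-right maximum, and so is `π (i+1)` unless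
`i` is last. Avoidance then forces every later entry to exceed `π i`, so `i` is a fixed point
(`fixed_of_isolated`). Thus the code maps the `231`-avoiding derangements injectively
to the sequences counted by `Fine n`.

The map is not onto when `n ≥ 3`: the sequence `0, 1, 2, 1, 1, …, 1` has no isolated index, but it
is the code of `n, 2, 1, 3, 4, …, n-1` alone, which has a fixed point in its second place
(`fixed_of_witness`).
-/

open Finset Polynomial

/-- The inversion code of `π`: the number of larger entries to the left of each position. -/
def code {n : ℕ} (π : Equiv.Perm (Fin n)) (i : Fin n) : ℕ :=
  #{j : Fin n | j < i ∧ π i < π j}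

lemma not_231 {n : ℕ} {π : Equiv.Perm (Fin n)} (h : AvoidsPat π (![1, 2, 0] : Fin 3 → Fin 3))
    {a b c : Fin n} (hab : a < b) (hbc : b < c) (h1 : π a < π b) (h2 : π c < π a) : False := by
  apply h
  refine ⟨![a, b, c], ?_, ?_⟩
  · intro x y hxy
    fin_cases x <;> fin_cases y <;> simp_all
    exact hab.trans hbc
  · have h3 := h2.trans h1
    intro x y
    fin_cases x <;> fin_cases y <;> simp [h1, h2, h3, h1.le, h2.le, h3.le]

lemma val_eq_card {n : ℕ} (π : Equiv.Perm (Fin n)) (i : Fin n) :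
    (π i).val = #{j : Fin n | π j < π i} := by
  have h : (univ.filter fun j : Fin n => π j < π i).map π.toEmbedding = Iio (π i) := by
    ext x
    simp only [mem_map_equiv, mem_filter, mem_univ, true_and, mem_Iio, Equiv.apply_symm_apply]
  rw [← Finset.card_map π.toEmbedding, h, Fin.card_Iio]

lemma isSR_code {n : ℕ} {π : Equiv.Perm (Fin n)}
    (hπ : AvoidsPat π (![1, 2, 0] : Fin 3 → Fin 3)) : IsSR (code π) := by
  constructor
  · intro h
    rw [code, card_eq_zero, filter_eq_empty_iff]
    rintro x - ⟨hx, -⟩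
    simp [Fin.lt_def] at hx
  · intro i h
    have hsub : (univ.filter fun j : Fin n => j < ⟨i.1 + 1, h⟩ ∧ π ⟨i.1 + 1, h⟩ < π j) ⊆
        insert i (univ.filter fun j : Fin n => j < i ∧ π i < π j) := by
      intro j hj
      simp only [mem_filter, mem_univ, true_and, mem_insert] at hj ⊢
      by_cases hji : j = i
      · exact Or.inl hji
      right
      have hlt : j < i := by
        have := hj.1
        rw [Fin.lt_def] at this ⊢
        have : j.1 ≠ i.1 := fun e => hji (Fin.ext e)
        simp only at *
        omega
      refine ⟨hlt, ?_⟩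
      by_contra hc
      have hne : π j ≠ π i := fun e => hji (π.injective e)
      exact not_231 hπ hlt (c := ⟨i.1 + 1, h⟩) (by simp [Fin.lt_def])
        (lt_of_le_of_ne (not_lt.1 hc) hne) hj.2
    exact (card_le_card hsub).trans (card_insert_le _ _)

lemma code_eq_zero {n : ℕ} {π : Equiv.Perm (Fin n)} {i : Fin n} (h : code π i = 0)
    {j : Fin n} (hj : j < i) : π j < π i := by
  rw [code, card_eq_zero, filter_eq_empty_iff] at h
  have h1 := h (mem_univ j)
  have hne : π j ≠ π i := fun e => hj.ne (π.injective e)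
  exact lt_of_le_of_ne (not_lt.1 fun hc => h1 ⟨hj, hc⟩) hne

lemma fixed_of_isolated {n : ℕ} {π : Equiv.Perm (Fin n)}
    (hπ : AvoidsPat π (![1, 2, 0] : Fin 3 → Fin 3)) {i : Fin n} (hi : IsIsolated (code π) i) :
    π i = i := by
  -- Entries on the right of an isolated position are larger: otherwise `i, i+1, k` is a `231`.
  have key : ∀ k, i < k → π i < π k := by
    intro k hk
    have hlt : i.1 + 1 < n := by have := k.2; rw [Fin.lt_def] at hk; omega
    have hs : π i < π ⟨i.1 + 1, hlt⟩ := code_eq_zero (hi.2 hlt) (by simp [Fin.lt_def])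
    by_cases hk1 : k = ⟨i.1 + 1, hlt⟩
    · rw [hk1]; exact hs
    have hk2 : (⟨i.1 + 1, hlt⟩ : Fin n) < k := by
      have : k.1 ≠ i.1 + 1 := fun e => hk1 (Fin.ext e)
      rw [Fin.lt_def] at hk ⊢
      simp only
      omega
    by_contra hc
    have hne : π k ≠ π i := fun e => hk.ne' (π.injective e)
    exact not_231 hπ (by simp [Fin.lt_def]) hk2 hs (lt_of_le_of_ne (not_lt.1 hc) hne)
  have hset : (univ.filter fun j : Fin n => π j < π i) = Iio i := by
    ext j
    simp only [mem_filter, mem_univ, true_and, mem_Iio]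
    refine ⟨fun h => ?_, code_eq_zero hi.1⟩
    by_contra hc
    rcases (not_lt.1 hc).eq_or_lt with e | hl
    · rw [e] at h; exact h.false
    · exact (h.trans (key j hl)).false
  apply Fin.ext
  rw [val_eq_card, hset, Fin.card_Iio]

/-- The inversions ending at `i` are the `code π i` largest among the entries on the left of `i`,
so they are found by induction on `i`. -/
lemma lt_iff_of_code_eq {n : ℕ} {π ρ : Equiv.Perm (Fin n)} (h : code π = code ρ) (i : Fin n) :
    ∀ j, j < i → (π i < π j ↔ ρ i < ρ j) := by
  induction i using WellFoundedLT.induction with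
  | ind i ih =>
  have ord : ∀ a b, a < i → b < i → (π a < π b ↔ ρ a < ρ b) := by
    intro a b ha hb
    rcases lt_trichotomy a b with hab | rfl | hab
    · have h1 := ih b hb a hab
      have h2 : π a ≠ π b := fun e => hab.ne (π.injective e)
      have h3 : ρ a ≠ ρ b := fun e => hab.ne (ρ.injective e)
      rw [← not_le, ← not_le, not_iff_not, h2.symm.le_iff_lt, h3.symm.le_iff_lt]
      exact h1
    · simp
    · exact ih a ha b hab
  set A := univ.filter fun j : Fin n => j < i ∧ π i < π j with hA
  set B := univ.filter fun j : Fin n => j < i ∧ ρ i < ρ j with hB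
  have hcard : #A = #B := congrFun h i
  have hAB : A = B := by
    -- Upper sets of one linear order are nested, hence equal once their sizes agree.
    by_cases hsub : A ⊆ B
    · exact eq_of_subset_of_card_le hsub hcard.ge
    · obtain ⟨x, hx, hxB⟩ := not_subset.1 hsub
      refine (eq_of_subset_of_card_le (fun y hy => ?_) hcard.le).symm
      simp only [hA, hB, mem_filter, mem_univ, true_and] at hx hxB hy ⊢
      refine ⟨hy.1, hx.2.trans ?_⟩
      rw [ord x y hx.1 hy.1]
      exact lt_of_le_of_lt (not_lt.1 fun hc => hxB ⟨hx.1, hc⟩) hy.2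
  intro j hj
  have := Finset.ext_iff.1 hAB j
  simpa [hA, hB, hj] using this

lemma code_injective {n : ℕ} : Function.Injective (code (n := n)) := by
  intro π ρ h
  ext i
  rw [val_eq_card, val_eq_card]
  congr 1
  ext j
  simp only [mem_filter, mem_univ, true_and]
  rcases lt_trichotomy i j with hij | rfl | hij
  · exact (lt_iff_of_code_eq h j i hij)
  · simp
  · have h1 := lt_iff_of_code_eq h i j hij
    have h2 : π j ≠ π i := fun e => hij.ne (π.injective e)
    have h3 : ρ j ≠ ρ i := fun e => hij.ne (ρ.injective e)
    rw [← not_le, ← not_le, not_iff_not, h2.symm.le_iff_lt, h3.symm.le_iff_lt]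
    exact h1

/-- The sequence `0, 1, 2, 1, 1, …, 1`. -/
def witness (n : ℕ) (i : Fin n) : ℕ :=
  if i.1 = 0 then 0 else if i.1 = 2 then 2 else 1

lemma isSR_witness (n : ℕ) : IsSR (witness n) := by
  constructor
  · intro h; simp [witness]
  · intro i h
    simp only [witness]
    split_ifs <;> omega

lemma not_isolated_witness {n : ℕ} (hn : 3 ≤ n) (i : Fin n) : ¬ IsIsolated (witness n) i := by
  rintro ⟨h1, h2⟩
  have hi : i.1 = 0 := by
    by_contra hc
    simp only [witness, hc, if_false] at h1
    split_ifs at h1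
  have h3 := h2 (by omega)
  simp [witness, hi] at h3

/-- Only the third entry is smaller than the second one: any other smaller entry would have both
of the first two entries as larger predecessors. -/
lemma fixed_of_witness {n : ℕ} (hn : 3 ≤ n) {π : Equiv.Perm (Fin n)} (h : code π = witness n) :
    π ⟨1, by omega⟩ = ⟨1, by omega⟩ := by
  set p0 : Fin n := ⟨0, by omega⟩ with hp0
  set p1 : Fin n := ⟨1, by omega⟩ with hp1
  set p2 : Fin n := ⟨2, by omega⟩ with hp2
  have h10 : π p1 < π p0 := by
    have h1 : code π p1 = 1 := by rw [h]; simp [witness, hp1]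
    have hpos : 0 < code π p1 := by omega
    obtain ⟨j, hj⟩ := card_pos.1 hpos
    simp only [mem_filter, mem_univ, true_and] at hj
    have : j = p0 := by
      apply Fin.ext
      have := hj.1
      simp only [Fin.lt_def, hp0, hp1] at this ⊢
      omega
    exact this ▸ hj.2
  have h21 : π p2 < π p1 := by
    have h1 : code π p2 = 2 := by rw [h]; simp [witness, hp2]
    by_contra hc
    have hsub : (univ.filter fun j : Fin n => j < p2 ∧ π p2 < π j) ⊆ {p0} := by
      intro j hj
      simp only [mem_filter, mem_univ, true_and, mem_singleton] at hj ⊢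
      have hj1 : j ≠ p1 := by rintro rfl; exact hc hj.2
      apply Fin.ext
      have h3 := hj.1
      have h4 : j.1 ≠ 1 := fun e => hj1 (Fin.ext e)
      simp only [Fin.lt_def, hp0, hp2] at h3 ⊢
      omega
    have := card_le_card hsub
    rw [card_singleton] at this
    change code π p2 ≤ 1 at this
    omega
  have hset : (univ.filter fun j : Fin n => π j < π p1) = {p2} := by
    ext j
    simp only [mem_filter, mem_univ, true_and, mem_singleton]
    refine ⟨fun hj => ?_, fun e => e ▸ h21⟩
    by_contra hj2
    have hj0 : j ≠ p0 := by rintro rfl; exact (hj.trans h10).false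
    have hj1 : j ≠ p1 := by rintro rfl; exact hj.false
    have e0 : j.1 ≠ 0 := fun e => hj0 (Fin.ext e)
    have e1 : j.1 ≠ 1 := fun e => hj1 (Fin.ext e)
    have e2 : j.1 ≠ 2 := fun e => hj2 (Fin.ext e)
    have hc : code π j = 1 := by rw [h]; simp [witness, e0, e2]
    have hsub : ({p0, p1} : Finset (Fin n)) ⊆
        univ.filter fun k : Fin n => k < j ∧ π j < π k := by
      intro k hk
      simp only [mem_insert, mem_singleton] at hk
      simp only [mem_filter, mem_univ, true_and]
      rcases hk with rfl | rfl
      · exact ⟨by simp only [Fin.lt_def, hp0]; omega, hj.trans h10⟩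
      · exact ⟨by simp only [Fin.lt_def, hp1]; omega, hj⟩
    have h2 := card_le_card hsub
    rw [card_pair (by simp [hp0, hp1])] at h2
    change 2 ≤ code π j at h2
    omega
  apply Fin.ext
  rw [val_eq_card, hset, card_singleton]

lemma IsSR.le {n : ℕ} {r : Fin n → ℕ} (h : IsSR r) : ∀ (k : ℕ) (hk : k < n), r ⟨k, hk⟩ ≤ k := by
  intro k
  induction k with
  | zero => intro hk; exact (h.1 hk).le
  | succ k ih =>
    intro hk
    exact (h.2 ⟨k, by omega⟩ hk).trans (Nat.succ_le_succ (ih (by omega)))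

lemma finite_fine (n : ℕ) : Finite {r : Fin n → ℕ // IsSR r ∧ ∀ i, ¬ IsIsolated r i} := by
  apply Set.Finite.to_subtype
  refine (Set.finite_Icc (0 : Fin n → ℕ) (fun i => i.1)).subset ?_
  rintro r ⟨hr, -⟩
  exact ⟨fun i => Nat.zero_le _, fun i => hr.le i.1 i.2⟩

lemma ne_of_fpCount_eq_zero {n : ℕ} {π : Equiv.Perm (Fin n)} (h : fpCount π = 0) (i : Fin n) :
    π i ≠ i := by
  intro hi
  have := Finite.card_eq_zero_iff.1 h
  exact this.false ⟨i, hi⟩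

/-- `d_n(231) < F_n` for `n ≥ 3`. -/
theorem d_n_231_lt_fine (n : ℕ) (hn : 3 ≤ n) :
    sCount n 0 ![1, 2, 0] < Fine n := by
  have := finite_fine n
  let f : {π : Equiv.Perm (Fin n) // AvoidsPat π (![1, 2, 0] : Fin 3 → Fin 3) ∧ fpCount π = 0} →
      {r : Fin n → ℕ // IsSR r ∧ ∀ i, ¬ IsIsolated r i} := fun π =>
    ⟨code π.1, isSR_code π.2.1, fun i hi =>
      ne_of_fpCount_eq_zero π.2.2 i (fixed_of_isolated π.2.1 hi)⟩
  have hf : Function.Injective f := fun a b hab =>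
    Subtype.ext (code_injective (congrArg Subtype.val hab))
  let w : {r : Fin n → ℕ // IsSR r ∧ ∀ i, ¬ IsIsolated r i} :=
    ⟨witness n, isSR_witness n, not_isolated_witness hn⟩
  have hw : w ∉ Set.range f := by
    rintro ⟨π, hπ⟩
    exact ne_of_fpCount_eq_zero π.2.2 _ (fixed_of_witness hn (congrArg Subtype.val hπ))
  unfold sCount Fine
  have := Fintype.ofFinite {r : Fin n → ℕ // IsSR r ∧ ∀ i, ¬ IsIsolated r i}
  have := Fintype.ofFinite
    {π : Equiv.Perm (Fin n) // AvoidsPat π (![1, 2, 0] : Fin 3 → Fin 3) ∧ fpCount π = 0}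
  rw [Nat.card_eq_fintype_card, Nat.card_eq_fintype_card]
  exact Fintype.card_lt_of_injective_of_notMem f hf hw
end

section
/- Write F_n^k = s_n^k(321), with the convention F_n^k = 0 when k < 0 or k > n. Then for all n ≥ 2 and 1 ≤ k ≤ n, one has 2F_n^k + F_{n−1}^k = F_n^{k−1} + 2F_{n−1}^{k−1} − F_{n−1}^{k−2}. -/
/-!
Write `P n` for the polynomial whose `X ^ k` coefficient is the number of `321`-avoiding permutations
of `Fin n` with `k` fixed points. Taking coefficients of `X ^ k`, the recurrence for `n, k ≥ 1` says
that `(2 - X) * P n + (1 - X) ^ 2 * P (n - 1)` is a constant polynomial (it is in fact the Catalan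
number).

To compute `P n`, build a `321`-avoiding permutation by putting a value `v` in front of a smaller
one, `σ`, and shifting up the values `≥ v` of `σ`. The result avoids `321` exactly when `σ` does and
the values of `σ` below `v` are increasing (`noLongDesc_ins`). If `v = 0`, every fixed point of `σ`
survives and one is gained; if `v ≠ 0`, exactly the fixed points `≥ v` survive (`fixGe_ins`).
So one keeps track of `W n m`, which counts the `321`-avoiding permutations whose values below `m`
are increasing, by their fixed points `≥ m`; `W n 0` is `P n`. With `w j m = W (m + j) m` the
insertion gives

* `w 0 m = 1`,
* `w (j + 1) (m + 1) = w (j + 1) m + w j (m + 2)` (`W_step`),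
* `w (j + 1) 0 = w j 1 + (X - 1) * w j 0` (`W_step_zero`).

At `X = 1` these define the ballot numbers `B j m`. Both triangles satisfy linear recursions, and
induction on `j` and then on `m` gives (`W_ballot`)
`(2 - X) * w (j + 1) m + (1 - X) ^ 2 * w j m = (1 - X) * B (j + 1) (m - 1) + B (j + 1) m`,
where the first term on the right is absent for `m = 0`. The case `m = 0` is the claim.
-/

open Finset Polynomial

/-- `F_n^k = s_n^k(321)` extended to integer `k`, zero for `k < 0`. -/
noncomputable def Fk (n : ℕ) (k : ℤ) : ℤ :=
  if 0 ≤ k then (sCount n k.toNat ![2, 1, 0] : ℤ) else 0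

namespace FixedPoints321

/-! ### Statistics on permutations -/

/-- `σ` has no decreasing subsequence of length three, i.e. it avoids `321`. -/
def NoLongDesc {n : ℕ} (σ : Equiv.Perm (Fin n)) : Prop :=
  ∀ i j k, i < j → j < k → σ j < σ i → ¬ σ k < σ j

/-- The larger value of every inversion of `σ` is at least `m`. Equivalently, the values
`0, …, m - 1` occur in increasing order. -/
def InvTopsGe {n : ℕ} (m : ℕ) (σ : Equiv.Perm (Fin n)) : Prop :=
  ∀ i j, i < j → σ j < σ i → m ≤ (σ i : ℕ)

/-- The number of fixed points of `σ` that are at least `m`. -/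
def fixGe {n : ℕ} (m : ℕ) (σ : Equiv.Perm (Fin n)) : ℕ :=
  #{i : Fin n | σ i = i ∧ m ≤ (i : ℕ)}

open Classical in
/-- The contribution of `σ` to `W n m`. -/
noncomputable def wt {n : ℕ} (m : ℕ) (σ : Equiv.Perm (Fin n)) : ℤ[X] :=
  if NoLongDesc σ ∧ InvTopsGe m σ then X ^ fixGe m σ else 0

/-- The generating polynomial, by the number of fixed points at least `m`, of the
`321`-avoiding permutations of `Fin n` in which the values below `m` occur in increasing order. -/
noncomputable def W (n m : ℕ) : ℤ[X] := ∑ σ : Equiv.Perm (Fin n), wt m σ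

/-! ### Inserting a first value -/

/-- The permutation obtained from `σ` by putting the value `v` in front and shifting up by one
the values of `σ` that are at least `v`. -/
def ins {n : ℕ} (v : Fin (n + 1)) (σ : Equiv.Perm (Fin n)) : Equiv.Perm (Fin (n + 1)) :=
  ((finSuccEquiv' 0).trans (Equiv.optionCongr σ)).trans (finSuccEquiv' v).symm

@[simp] lemma ins_zero {n : ℕ} (v : Fin (n + 1)) (σ : Equiv.Perm (Fin n)) : ins v σ 0 = v := by
  simp [ins]

@[simp] lemma ins_succ {n : ℕ} (v : Fin (n + 1)) (σ : Equiv.Perm (Fin n)) (i : Fin n) :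
    ins v σ i.succ = v.succAbove (σ i) := by
  simp [ins, finSuccEquiv'_zero]

lemma ins_bijective (n : ℕ) :
    Function.Bijective fun p : Fin (n + 1) × Equiv.Perm (Fin n) => ins p.1 p.2 := by
  rw [Fintype.bijective_iff_injective_and_card]
  refine ⟨?_, by simp [Fintype.card_perm, Nat.factorial_succ]⟩
  rintro ⟨v, σ⟩ ⟨w, τ⟩ h
  have h0 : v = w := by simpa using congrArg (fun π : Equiv.Perm (Fin (n + 1)) => π 0) h
  subst h0
  congr 1
  refine Equiv.ext fun i => ?_
  simpa using congrArg (fun π : Equiv.Perm (Fin (n + 1)) => π i.succ) h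

lemma W_succ_eq_sum (n m : ℕ) :
    W (n + 1) m = ∑ v : Fin (n + 1), ∑ σ : Equiv.Perm (Fin n), wt m (ins v σ) := by
  rw [W, ← (Equiv.ofBijective _ (ins_bijective n)).sum_comp, Fintype.sum_prod_type]
  rfl

lemma succAbove_val {n : ℕ} (v : Fin (n + 1)) (i : Fin n) :
    (v.succAbove i : ℕ) = if (i : ℕ) < v then (i : ℕ) else i + 1 := by
  rw [Fin.succAbove]
  simp only [Fin.lt_def, Fin.val_castSucc]
  split_ifs <;> simp

lemma noLongDesc_ins {n : ℕ} (v : Fin (n + 1)) (σ : Equiv.Perm (Fin n)) :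
    NoLongDesc (ins v σ) ↔ NoLongDesc σ ∧ InvTopsGe v σ := by
  constructor
  · intro h
    refine ⟨fun i j k hij hjk h1 h2 => ?_, fun i j hij h1 => ?_⟩
    · exact h i.succ j.succ k.succ (by simpa) (by simpa) (by simpa) (by simpa)
    · by_contra hlt
      push Not at hlt
      refine h 0 i.succ j.succ (Fin.succ_pos _) (by simpa) ?_ (by simpa)
      simp only [ins_succ, ins_zero, Fin.lt_def, succAbove_val]
      simp [hlt]
  · rintro ⟨h, hI⟩ i j k hij hjk h1 h2
    obtain ⟨j, rfl⟩ := Fin.exists_succ_eq.2 (Fin.pos_iff_ne_zero.1 ((Fin.zero_le _).trans_lt hij))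
    obtain ⟨k, rfl⟩ := Fin.exists_succ_eq.2 (Fin.pos_iff_ne_zero.1 ((Fin.zero_le _).trans_lt hjk))
    simp only [ins_succ, Fin.succAbove_lt_succAbove_iff, Fin.succ_lt_succ_iff] at h2 hjk
    induction i using Fin.cases with
    | zero =>
      have := hI j k hjk h2
      simp only [ins_succ, ins_zero, Fin.lt_def, succAbove_val] at h1
      split_ifs at h1 <;> omega
    | succ i =>
      simp only [ins_succ, Fin.succAbove_lt_succAbove_iff, Fin.succ_lt_succ_iff] at h1 hij
      exact h i j k hij hjk h1 h2

lemma invTopsGe_ins_zero {n : ℕ} (m : ℕ) (σ : Equiv.Perm (Fin n)) :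
    InvTopsGe m (ins 0 σ) ↔ InvTopsGe (m - 1) σ := by
  constructor
  · intro h i j hij h1
    have := h i.succ j.succ (by simpa) (by simpa)
    simp at this
    omega
  · intro h i j hij h1
    obtain ⟨j, rfl⟩ := Fin.exists_succ_eq.2 (Fin.pos_iff_ne_zero.1 ((Fin.zero_le _).trans_lt hij))
    induction i using Fin.cases with
    | zero => simp at h1
    | succ i =>
      have := h i j (by simpa using hij) (by simpa using h1)
      simp
      omega

lemma invTopsGe_ins {n : ℕ} (m : ℕ) {v : Fin (n + 1)} (hv : v ≠ 0) {σ : Equiv.Perm (Fin n)}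
    (hI : InvTopsGe v σ) : InvTopsGe m (ins v σ) ↔ m ≤ (v : ℕ) := by
  have hv' : 0 < (v : ℕ) := Fin.pos_iff_ne_zero.2 hv
  constructor
  · intro h
    -- The value `0` occurs after the first entry `v`, so the two form an inversion.
    have h0 : 0 < n := by omega
    have := h 0 (σ.symm ⟨0, h0⟩).succ (Fin.succ_pos _) (by
      simp only [ins_succ, ins_zero, Fin.lt_def, succAbove_val]
      simp [hv'])
    simpa using this
  · intro h i j hij h1
    obtain ⟨j, rfl⟩ := Fin.exists_succ_eq.2 (Fin.pos_iff_ne_zero.1 ((Fin.zero_le _).trans_lt hij))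
    induction i using Fin.cases with
    | zero => simpa
    | succ i =>
      have := hI i j (by simpa using hij) (by simpa using h1)
      simp only [ins_succ, succAbove_val]
      split_ifs <;> omega

lemma fixGe_ins_zero_succ {n : ℕ} (m : ℕ) (σ : Equiv.Perm (Fin n)) :
    fixGe (m + 1) (ins 0 σ) = fixGe m σ := by
  rw [fixGe, fixGe, Fin.card_filter_univ_succ]
  simp

lemma fixGe_ins_zero_zero {n : ℕ} (σ : Equiv.Perm (Fin n)) :
    fixGe 0 (ins 0 σ) = fixGe 0 σ + 1 := by
  rw [fixGe, fixGe, Fin.card_filter_univ_succ]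
  simp

/-- If the values below `v` occur in increasing order, then no value `i + 1 < v` sits at position
`i`: the `i + 1` values below it would have to fit into the `i` positions to its left. -/
lemma apply_ne_succ {n v : ℕ} {σ : Equiv.Perm (Fin n)} (hI : InvTopsGe v σ) (i : Fin n)
    (hi : (σ i : ℕ) < v) : (σ i : ℕ) ≠ i + 1 := by
  intro h
  have hsub : (Finset.Iio (σ i)).map σ.symm.toEmbedding ⊆ Finset.Iio i := by
    intro j hj
    simp only [Finset.mem_map_equiv, Equiv.symm_symm, Finset.mem_Iio] at hj ⊢
    by_contra hij
    rcases eq_or_lt_of_le (not_lt.1 hij) with rfl | hlt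
    · exact lt_irrefl _ hj
    · have := hI i j hlt hj
      omega
  have := Finset.card_le_card hsub
  simp at this
  omega

/-- If the values below `v` occur in increasing order in `σ`, then the fixed points of `σ` that
survive the insertion of `v ≠ 0` are those at least `v`, and no new ones arise. -/
lemma fixGe_ins {n m : ℕ} {v : Fin (n + 1)} (hv : v ≠ 0) (hm : m ≤ (v : ℕ))
    {σ : Equiv.Perm (Fin n)} (hI : InvTopsGe v σ) : fixGe m (ins v σ) = fixGe v σ := by
  rw [fixGe, fixGe, Fin.card_filter_univ_succ]
  simp only [ins_zero, hv, false_and, if_false, ins_succ]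
  congr 1
  ext i
  have h := apply_ne_succ hI i
  simp only [Finset.mem_filter, Finset.mem_univ, true_and, Fin.ext_iff, succAbove_val,
    Fin.val_succ]
  split_ifs <;> omega

lemma wt_ins_zero_succ {n : ℕ} (m : ℕ) (σ : Equiv.Perm (Fin n)) :
    wt (m + 1) (ins 0 σ) = wt m σ := by
  have h0 : InvTopsGe ((0 : Fin (n + 1)) : ℕ) σ := fun _ _ _ _ => by simp
  have h : NoLongDesc (ins 0 σ) ∧ InvTopsGe (m + 1) (ins 0 σ) ↔ NoLongDesc σ ∧ InvTopsGe m σ := by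
    simp only [noLongDesc_ins, invTopsGe_ins_zero, h0, and_true, Nat.add_sub_cancel]
  classical exact if_congr h (by rw [fixGe_ins_zero_succ]) rfl

lemma wt_ins_zero_zero {n : ℕ} (σ : Equiv.Perm (Fin n)) :
    wt 0 (ins 0 σ) = X * wt 0 σ := by
  have h0 : InvTopsGe ((0 : Fin (n + 1)) : ℕ) σ := fun _ _ _ _ => by simp
  have h : NoLongDesc (ins 0 σ) ∧ InvTopsGe 0 (ins 0 σ) ↔ NoLongDesc σ ∧ InvTopsGe 0 σ := by
    simp only [noLongDesc_ins, invTopsGe_ins_zero, h0, and_true, Nat.zero_sub]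
  rw [wt, wt, mul_ite, mul_zero, fixGe_ins_zero_zero, pow_succ']
  classical exact if_congr h rfl rfl

lemma wt_ins {n : ℕ} (m : ℕ) {v : Fin (n + 1)} (hv : v ≠ 0) (σ : Equiv.Perm (Fin n)) :
    wt m (ins v σ) = if m ≤ (v : ℕ) then wt v σ else 0 := by
  by_cases hI : InvTopsGe v σ
  · by_cases hm : m ≤ (v : ℕ)
    · have h : NoLongDesc (ins v σ) ∧ InvTopsGe m (ins v σ) ↔ NoLongDesc σ ∧ InvTopsGe v σ := by
        simp only [noLongDesc_ins, invTopsGe_ins m hv hI, hI, hm, and_true]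
      rw [if_pos hm]
      classical exact if_congr h (by rw [fixGe_ins hv hm hI]) rfl
    · simp [wt, invTopsGe_ins m hv hI, hm]
  · simp [wt, noLongDesc_ins, hI]

/-! ### Recursions for the generating polynomials -/

/-- `W n m + W n (m + 1) + ⋯ + W n n`. For `m ≥ 1` this is the contribution to `W (n + 1) m` of
the permutations with a nonzero first value. -/
noncomputable def tailSum (n m : ℕ) : ℤ[X] := ∑ v ∈ Finset.Icc m n, W n v

lemma sum_wt_ins_succ (n m : ℕ) :
    ∑ v : Fin n, ∑ σ : Equiv.Perm (Fin n), wt m (ins v.succ σ) = tailSum n (max m 1) := by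
  have h1 : ∀ v : Fin n, ∑ σ : Equiv.Perm (Fin n), wt m (ins v.succ σ) =
      (fun v : ℕ => if m ≤ v + 1 then W n (v + 1) else 0) v := by
    intro v
    simp only [wt_ins m (Fin.succ_ne_zero v), Fin.val_succ, W]
    split_ifs <;> simp
  rw [Finset.sum_congr rfl fun v _ => h1 v, 
    Fin.sum_univ_eq_sum_range (fun v : ℕ => if m ≤ v + 1 then W n (v + 1) else 0) n, ← Finset.sum_filter,
    tailSum]
  refine Finset.sum_bij (fun v _ => v + 1) ?_ ?_ ?_ ?_
  · intro a ha; simp at ha ⊢; omega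
  · intro a _ b _ h; omega
  · intro b hb
    simp at hb
    exact ⟨b - 1, by simp; omega, by omega⟩
  · intros; rfl

lemma W_succ_succ (n m : ℕ) : W (n + 1) (m + 1) = W n m + tailSum n (m + 1) := by
  rw [W_succ_eq_sum, Fin.sum_univ_succ, sum_wt_ins_succ]
  simp [wt_ins_zero_succ, W]

lemma W_succ_zero (n : ℕ) : W (n + 1) 0 = X * W n 0 + tailSum n 1 := by
  rw [W_succ_eq_sum, Fin.sum_univ_succ, sum_wt_ins_succ]
  simp [wt_ins_zero_zero, W, Finset.mul_sum]

/-- Recognising the tail sum as a single `W` turns the recursions into three-term ones. -/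
lemma tailSum_eq {n m : ℕ} (h : m + 1 ≤ n) : tailSum n (m + 1) = W (n + 1) (m + 2) := by
  rw [W_succ_succ, tailSum, tailSum, ← Finset.insert_Icc_succ_left_eq_Icc h, Finset.sum_insert]
  · rfl
  · simp

lemma W_self (n : ℕ) : W n n = 1 := by
  induction n with
  | zero =>
    simp only [W, wt, Finset.univ_unique, Finset.sum_singleton]
    rw [if_pos ⟨fun i => i.elim0, fun i => i.elim0⟩]
    simp [fixGe]
  | succ n ih => rw [W_succ_succ, ih]; simp [tailSum]

lemma W_step (j m : ℕ) :
    W (m + 1 + (j + 1)) (m + 1) = W (m + (j + 1)) m + W (m + 2 + j) (m + 2) := by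
  rw [show m + 1 + (j + 1) = (m + (j + 1)) + 1 by ring, W_succ_succ, tailSum_eq (by omega)]
  congr 2
  ring

lemma W_step_zero (j : ℕ) : W (j + 1) 0 = W (1 + j) 1 + (X - 1) * W j 0 := by
  rw [add_comm 1 j, W_succ_zero, W_succ_succ]
  ring

/-! ### Comparison with the ballot numbers -/

/-- Ballot numbers, as a triangle of the convolution powers of the Catalan numbers: `B j m` is the
coefficient of `x ^ j` in the `(m + 1)`-st power of the Catalan generating function. -/
def B : ℕ → ℕ → ℤ
  | 0, _ => 1
  | j + 1, 0 => B j 1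
  | j + 1, m + 1 => B (j + 1) m + B j (m + 2)

/-- The linear relation between the `W` triangle, read along its diagonals, and the ballot
numbers. Its first part says that `(2 - X) * W n 0 + (1 - X) ^ 2 * W (n - 1) 0` is constant. -/
lemma W_ballot (j : ℕ) : 
    (2 - X) * W (j + 1) 0 + (1 - X) ^ 2 * W j 0 = C (B (j + 1) 0) ∧
    ∀ m, (2 - X) * W (m + 1 + (j + 1)) (m + 1) + (1 - X) ^ 2 * W (m + 1 + j) (m + 1) =
      (1 - X) * C (B (j + 1) m) + C (B (j + 1) (m + 1)) := by
  induction j with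
  | zero =>
    have h0 : (2 - X) * W (0 + 1) 0 + (1 - X) ^ 2 * W 0 0 = C (B (0 + 1) 0) := by
      rw [W_step_zero, add_zero, W_self, W_self]
      simp [B]
      ring
    refine ⟨h0, fun m => ?_⟩
    induction m with
    | zero =>
      have := W_step 0 0
      simp only [zero_add, add_zero, W_self, B, map_add, map_one] at this h0 ⊢
      linear_combination h0 + (2 - X) * this
    | succ m ih =>
      have := W_step 0 (m + 1)
      simp only [zero_add, add_zero, W_self, B, map_add, map_one] at this ih ⊢
      linear_combination ih + (2 - X) * this
  | succ j ihj =>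
    obtain ⟨ih0, ih⟩ := ihj
    have h0 : (2 - X) * W (j + 1 + 1) 0 + (1 - X) ^ 2 * W (j + 1) 0 = C (B (j + 1 + 1) 0) := by
      have h1 := ih 0
      have e1 := W_step_zero (j + 1)
      have e2 := W_step_zero j
      simp only [zero_add, B] at h1 ih0 ⊢
      linear_combination h1 - (1 - X) * ih0 + (2 - X) * e1 + (1 - X) ^ 2 * e2
    refine ⟨h0, fun m => ?_⟩
    have h1 := ih (m + 1)
    induction m with
    | zero =>
      have e1 := W_step (j + 1) 0
      have e2 := W_step j 0
      simp only [zero_add, B, map_add] at h1 h0 e1 e2 ⊢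
      linear_combination h0 + h1 + (2 - X) * e1 + (1 - X) ^ 2 * e2
    | succ m ihm =>
      have e1 := W_step (j + 1) (m + 1)
      have e2 := W_step j (m + 1)
      have ihm := ihm (ih (m + 1))
      simp only [B, map_add] at h1 ihm e1 e2 ⊢
      linear_combination ihm + h1 + (2 - X) * e1 + (1 - X) ^ 2 * e2

/-! ### Coefficients -/

lemma avoids_iff {n : ℕ} (π : Equiv.Perm (Fin n)) :
    AvoidsPat π ![2, 1, 0] ↔ NoLongDesc π := by
  constructor
  · intro h i j k hij hjk h1 h2
    refine h ⟨![i, j, k], ?_, ?_⟩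
    · intro a b hab
      fin_cases a <;> fin_cases b <;> simp_all [hij.trans hjk]
    · intro a b
      fin_cases a <;> fin_cases b <;>
        simp [h1, h2, h1.le, h2.le, h2.trans h1, (h2.trans h1).le]
  · rintro h ⟨f, hf, hα⟩
    exact h (f 0) (f 1) (f 2) (hf (by decide)) (hf (by decide)) ((hα 1 0).2 (by decide))
      ((hα 2 1).2 (by decide))

lemma coeff_W (n k : ℕ) : (W n 0).coeff k = sCount n k ![2, 1, 0] := by
  classical
  have hI : ∀ σ : Equiv.Perm (Fin n), InvTopsGe 0 σ := fun _ _ _ _ _ => Nat.zero_le _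
  have hf : ∀ σ : Equiv.Perm (Fin n), fixGe 0 σ = fpCount σ := by
    intro σ
    simp [fixGe, fpCount, Fintype.card_subtype]
  simp only [W, wt, finsetSum_coeff, sCount, Nat.card_eq_fintype_card, Fintype.card_subtype,
    avoids_iff, Finset.card_filter, Nat.cast_sum, hI, hf, and_true]
  refine Finset.sum_congr rfl fun σ _ => ?_
  by_cases h : NoLongDesc σ <;> simp [h, coeff_X_pow, eq_comm]

lemma coeff_X_mul_W (n k : ℕ) : (X * W n 0).coeff k = Fk n ((k : ℤ) - 1) := by
  cases k with
  | zero => simp [Fk]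
  | succ k => simp [Fk, coeff_W]

lemma Fk_natCast (n k : ℕ) : Fk n (k : ℤ) = (W n 0).coeff k := by
  simp [Fk, coeff_W]

lemma coeff_X_sq_mul_W (n k : ℕ) : (X * (X * W n 0)).coeff k = Fk n ((k : ℤ) - 2) := by
  cases k with
  | zero => simp [Fk]
  | succ k =>
    rw [coeff_X_mul, coeff_X_mul_W]
    congr 1
    push_cast
    ring

end FixedPoints321

open FixedPoints321 in
/-- `2 F_n^k + F_{n-1}^k = F_n^{k-1} + 2 F_{n-1}^{k-1} - F_{n-1}^{k-2}`. -/
theorem Fk_recurrence (n k : ℕ) (hn : 2 ≤ n) (hk1 : 1 ≤ k) (hk2 : k ≤ n) :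
    2 * Fk n (k : ℤ) + Fk (n - 1) (k : ℤ) =
      Fk n ((k : ℤ) - 1) + 2 * Fk (n - 1) ((k : ℤ) - 1) - Fk (n - 1) ((k : ℤ) - 2) := by
  obtain ⟨j, rfl⟩ : ∃ j, n = j + 1 := ⟨n - 1, by omega⟩
  have h : C 2 * W (j + 1) 0 - X * W (j + 1) 0 + (W j 0 - C 2 * (X * W j 0) + X * (X * W j 0))
      = C (B (j + 1) 0) := by
    rw [← (W_ballot j).1, map_ofNat]
    ring
  have hc := congrArg (fun p : ℤ[X] => p.coeff k) h
  simp only [coeff_add, coeff_sub, coeff_C_mul, coeff_X_mul_W, coeff_X_sq_mul_W, ← Fk_natCast,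
    coeff_C, if_neg (show k ≠ 0 by omega)] at hc
  rw [Nat.add_sub_cancel]
  linarith
end
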